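/- Fix δ > 0 and ε > 0. Then there exist C > 0, η > 0 and n₀ such that for all n ≥ n₀ and all M, k with M/N ∈ [δ, 1−δ] and k/n ∈ [δ, 1−δ], with probability at least 1 − exp(−n^η) over G = G_{n,M} the following holds for each i ∈ {0,1,2}: Var(E[(W' − W)^i · (W̄' − W̄)^{2−i} | 𝐖]) ≤ C·n^{−3+ε}, where the variance and conditional expectation are over the random choice of the uniform k-set S, x uniform on S, and x̄ uniform on S̄, conditioning on the pair 𝐖 = (W, W̄). -/

import Mathlib

/-!
Since `𝐖` is a function of `S`, Jensen's inequality bounds the variance of `E[f | 𝐖]` by the mean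
square deviation of `E[f | S]` from any constant. It therefore suffices that, for most graphs,
`n² E[f | S]` is close to one explicit number for all but an exponentially small fraction of the
`k`-sets `S`.

Put `p = M / N` and `ξ e = 1[e ∈ G] - p`. The increment of `e(S)` or `e(S̄)` under a swap is a
difference of two centred degrees minus one `ξ`. Averaging a product of two such increments over
`(x, x̄)` leaves sums of centred degrees and sums over vertices of products of two centred degrees.
The diagonal part of the latter gives the explicit number up to linear sums; the off-diagonal part
is a quadratic form over pairs of distinct edges sharing a vertex.

For a fixed `S` these quantities are controlled in the binomial random graph. Linear sums satisfy
Hoeffding's inequality. For the quadratic form, reveal the edges one by one: the coefficient of an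
edge is a linear form in earlier edges, which is of order `√n` up to a factor `L = n ^ o(1)` with
high probability; after truncation of these coefficients, Azuma's inequality bounds the form by
`O(n ^ (3/2) L²)`. So outside an event of probability `O(n² exp (-L² / 4))` the set `S` is typical,
and then `n² E[f | S]` deviates by `O(√n L²)`, which contributes `O(L⁴ n⁻³)` to the variance.

Because the mode of a binomial distribution with integer mean is its mean, passing from the binomial
random graph to `G_{n,M}` multiplies probabilities by at most `N + 1`. Double counting pairs
(atypical `k`-set, graph) and Markov's inequality then show that with probability at least
`1 - exp (-L)` at most a fraction `exp (-L)` of the `k`-sets is atypical; on these the deviation is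
bounded trivially. The choice `L = n ^ (ε / 4)` finishes the proof.
-/

open Finset MeasureTheory ProbabilityTheory

noncomputable section

/-- Uniform probability of an event `P` over a finite sample space `Ω`. -/
def Pru {α : Type*} (Ω : Finset α) (P : α → Prop) : ℝ := by
  classical exact ((Ω.filter P).card : ℝ) / Ω.card

/-- Expectation of `f` under the uniform distribution on `Ω`. -/
def Exu {α : Type*} (Ω : Finset α) (f : α → ℝ) : ℝ := (∑ a ∈ Ω, f a) / Ω.card

/-- Variance of `f` under the uniform distribution on `Ω`. -/
def Varu {α : Type*} (Ω : Finset α) (f : α → ℝ) : ℝ := Exu Ω (fun a => (f a - Exu Ω f) ^ 2)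

/-- Conditional expectation of `f` given the value of `g`, under uniform distribution on `Ω`. -/
def condExpU {α β : Type*} (Ω : Finset α) (f : α → ℝ) (g : α → β) (ω : α) : ℝ := by
  classical exact Exu (Ω.filter (fun ω' => g ω' = g ω)) f

/-- The edge set of the complete graph on `[n]`. -/
def completeEdges (n : ℕ) : Finset (Sym2 (Fin n)) := by
  classical exact Finset.univ.filter (fun e => ¬ e.IsDiag)

/-- A finset of `Sym2`s is a graph if it has no loops. -/
def IsGraph {n : ℕ} (G : Finset (Sym2 (Fin n))) : Prop := ∀ e ∈ G, ¬ e.IsDiag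

/-- The sample space of `G_{n,M}`: all graphs on `[n]` with exactly `M` edges. -/
def graphsM (n M : ℕ) : Finset (Finset (Sym2 (Fin n))) := by
  classical exact (completeEdges n).powerset.filter (fun G => G.card = M)

/-- `e(S)`: number of edges of `G` with both endpoints in `S`. -/
def edgesIn {n : ℕ} (G : Finset (Sym2 (Fin n))) (S : Finset (Fin n)) : ℕ := by
  classical exact (G.filter (fun e => ∀ v ∈ e, v ∈ S)).card

/-- `d_S(v)`: number of neighbours of `v` (in graph `G`) lying in `S`. -/
def dS {n : ℕ} (G : Finset (Sym2 (Fin n))) (S : Finset (Fin n)) (v : Fin n) : ℕ := by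
  classical exact (S.filter (fun w => s(v, w) ∈ G)).card

/-- All `k`-element subsets of `[n]`. -/
def kSets (n k : ℕ) : Finset (Finset (Fin n)) := Finset.univ.powersetCard k

/-- Probability of an event under the uniform random graph `G_{n,M}`. -/
def PrGnM (n M : ℕ) (P : Finset (Sym2 (Fin n)) → Prop) : ℝ := Pru (graphsM n M) P

/-- Probability of an event under the binomial random graph `G_{n,p}`. -/
def PrGnp (n : ℕ) (p : ℝ) (P : Finset (Sym2 (Fin n)) → Prop) : ℝ := by
  classical exact ∑ G ∈ (completeEdges n).powerset,
    if (P G) then p ^ G.card * (1 - p) ^ ((completeEdges n).card - G.card) else 0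

/-- `N = n(n-1)/2` as a real number. -/
def Nr (n : ℕ) : ℝ := (n : ℝ) * ((n : ℝ) - 1) / 2

/-- `K = k(k-1)/2` as a real number. -/
def Kr (k : ℕ) : ℝ := (k : ℝ) * ((k : ℝ) - 1) / 2

/-- `λ = ((n²-k²)k²/(2n⁴))·(M(N-M)/N²)`. -/
def lamP (n M k : ℕ) : ℝ :=
  (((n:ℝ)^2 - (k:ℝ)^2) * (k:ℝ)^2 / (2 * (n:ℝ)^4)) * ((M:ℝ) * (Nr n - (M:ℝ)) / (Nr n)^2)

/-- The mean `K·M/N`. -/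
def muP (n M k : ℕ) : ℝ := Kr k * (M:ℝ) / Nr n

/-- `W = (e(S) - K·M/N)/n`. -/
def Wfun (n M k : ℕ) (G : Finset (Sym2 (Fin n))) (S : Finset (Fin n)) : ℝ :=
  ((edgesIn G S : ℝ) - muP n M k) / n

/-- `V = Σ_v d(v)² - n·d(G)²`, i.e. `n` times the degree variance. -/
def Vdeg {n : ℕ} (G : Finset (Sym2 (Fin n))) : ℝ :=
  (∑ v : Fin n, (dS G Finset.univ v : ℝ) ^ 2) - (n:ℝ) * (2 * (G.card : ℝ) / n) ^ 2

/-- Gaussian CDF with mean `m` and variance `v`. -/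
def gaussCdf (m v z : ℝ) : ℝ := ((gaussianReal m v.toNNReal) (Set.Iic z)).toReal

/-- Gaussian measure of a set, mean `m`, variance `v`. -/
def gaussMeas (m v : ℝ) (A : Set ℝ) : ℝ := ((gaussianReal m v.toNNReal) A).toReal

/-- Gaussian density with mean `m` and variance `v`. -/
def gaussPdf (m v x : ℝ) : ℝ := gaussianPDFReal m v.toNNReal x

/-- `P(Y ∈ ·)` for `Y ~ Bin(ν, p)`. -/
def binomPr (ν : ℕ) (p : ℝ) (P : ℕ → Prop) : ℝ := by
  classical exact ∑ j ∈ Finset.range (ν + 1),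
    if (P j) then (ν.choose j : ℝ) * p ^ j * (1 - p) ^ (ν - j) else 0

/-- Sample space for "uniform `k`-set `S`, then uniform `x ∈ S` and `x̄ ∈ S̄`". -/
def SwapΩ (n k : ℕ) : Finset (Σ _ : Finset (Fin n), Fin n × Fin n) :=
  (kSets n k).sigma (fun S => S ×ˢ Sᶜ)

/-- A triple `(a, r, t)` is valid for `β`. -/
def ValidTriple (β : ℝ) (n a r t : ℕ) : Prop :=
  a ≤ r ∧
  (∃ c : ℝ, 1/2 ≤ c ∧ c ≤ 1 ∧ (a : ℝ) = c * (t:ℝ) ^ ((3:ℝ)/2) * (n:ℝ) ^ (2*β - 1/2)) ∧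
  (r : ℝ) ≤ (n:ℝ) ^ (-β) * Real.sqrt ((n:ℝ) * (t:ℝ))

section UniformProbability

variable {α β ι κ : Type*}

lemma Exu_mono {Ω : Finset α} {f g : α → ℝ} (h : ∀ a ∈ Ω, f a ≤ g a) : Exu Ω f ≤ Exu Ω g :=
  div_le_div_of_nonneg_right (sum_le_sum h) (Nat.cast_nonneg _)

lemma Exu_nonneg {Ω : Finset α} {f : α → ℝ} (h : ∀ a ∈ Ω, 0 ≤ f a) : 0 ≤ Exu Ω f :=
  div_nonneg (sum_nonneg h) (Nat.cast_nonneg _)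

lemma Exu_congr {Ω : Finset α} {f g : α → ℝ} (h : ∀ a ∈ Ω, f a = g a) : Exu Ω f = Exu Ω g := by
  rw [Exu, Exu, sum_congr rfl h]

lemma Exu_const {Ω : Finset α} (hΩ : Ω.Nonempty) (c : ℝ) : Exu Ω (fun _ => c) = c := by
  rw [Exu, sum_const, nsmul_eq_mul, mul_div_cancel_left₀]
  exact_mod_cast hΩ.card_ne_zero

lemma Exu_const_le {c : ℝ} (hc : 0 ≤ c) (Ω : Finset α) : Exu Ω (fun _ => c) ≤ c := by
  rcases Ω.eq_empty_or_nonempty with rfl | hΩ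
  · simpa [Exu] using hc
  · exact (Exu_const hΩ c).le

lemma Exu_add (Ω : Finset α) (f g : α → ℝ) :
    Exu Ω (fun a => f a + g a) = Exu Ω f + Exu Ω g := by
  simp only [Exu, sum_add_distrib, add_div]

lemma Exu_mul_left (Ω : Finset α) (c : ℝ) (f : α → ℝ) :
    Exu Ω (fun a => c * f a) = c * Exu Ω f := by
  simp only [Exu, ← mul_sum, mul_div_assoc]

lemma Exu_sub_const {Ω : Finset α} (hΩ : Ω.Nonempty) (f : α → ℝ) (c : ℝ) :
    Exu Ω (fun a => f a - c) = Exu Ω f - c := by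
  simp only [sub_eq_add_neg, Exu_add, Exu_const hΩ]

lemma Exu_comm (Ω : Finset α) (Λ : Finset β) (f : α → β → ℝ) :
    Exu Ω (fun a => Exu Λ (f a)) = Exu Λ (fun b => Exu Ω (fun a => f a b)) := by
  simp only [Exu, ← sum_div]
  rw [sum_comm, div_right_comm]

lemma sq_Exu_le (Ω : Finset α) (f : α → ℝ) : Exu Ω f ^ 2 ≤ Exu Ω (fun a => f a ^ 2) := by
  rcases Ω.eq_empty_or_nonempty with rfl | hΩ
  · simp [Exu]
  have hcard : (0 : ℝ) < #Ω := by exact_mod_cast hΩ.card_pos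
  rw [Exu, Exu, div_pow, div_le_div_iff₀ (by positivity) hcard]
  nlinarith [sq_sum_le_card_mul_sum_sq (s := Ω) (f := f)]

lemma Pru_eq_Exu (Ω : Finset α) (P : α → Prop) [DecidablePred P] :
    Pru Ω P = Exu Ω (fun a => if P a then 1 else 0) := by
  rw [Pru, Exu, sum_boole]
  congr!

lemma Pru_mono {Ω : Finset α} {P Q : α → Prop} (h : ∀ a ∈ Ω, P a → Q a) : Pru Ω P ≤ Pru Ω Q := by
  classical
  rw [Pru_eq_Exu, Pru_eq_Exu]
  refine Exu_mono fun a ha => ?_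
  have := h a ha
  split_ifs <;> simp_all

lemma Pru_not {Ω : Finset α} (hΩ : Ω.Nonempty) (P : α → Prop) :
    Pru Ω (fun a => ¬ P a) = 1 - Pru Ω P := by
  classical
  rw [eq_sub_iff_add_eq, Pru_eq_Exu, Pru_eq_Exu, ← Exu_add]
  refine (Exu_congr fun a _ => ?_).trans (Exu_const hΩ 1)
  split_ifs <;> norm_num

lemma mul_Pru_lt_le_Exu {Ω : Finset α} {f : α → ℝ} (hf : ∀ a ∈ Ω, 0 ≤ f a) (s : ℝ) :
    s * Pru Ω (fun a => s < f a) ≤ Exu Ω f := by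
  classical
  rw [Pru_eq_Exu, ← Exu_mul_left]
  refine Exu_mono fun a ha => ?_
  split_ifs with h
  · simpa using h.le
  · simpa using hf a ha

lemma Exu_le_add_mul_Pru {Ω : Finset α} {P : α → Prop} {f : α → ℝ} {x y : ℝ} (hx : 0 ≤ x)
    (hgood : ∀ a ∈ Ω, ¬ P a → f a ≤ x) (hbad : ∀ a ∈ Ω, f a ≤ y) :
    Exu Ω f ≤ x + y * Pru Ω P := by
  classical
  calc Exu Ω f ≤ Exu Ω (fun a => x + y * if P a then 1 else 0) := by
        refine Exu_mono fun a ha => ?_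
        split_ifs with h
        · linarith [hbad a ha]
        · linarith [hgood a ha h]
    _ ≤ x + y * Pru Ω P := by
        rw [Exu_add, Exu_mul_left, Pru_eq_Exu]
        gcongr
        exact Exu_const_le hx Ω

-- Double counting of the pairs `(a, b)` with `R a b`, followed by Markov's inequality.
lemma Pru_lt_Pru_le {Ω : Finset α} {Λ : Finset β} {R : α → β → Prop} {q s : ℝ} (hq : 0 ≤ q)
    (hs : 0 < s) (h : ∀ b ∈ Λ, Pru Ω (fun a => R a b) ≤ q) :
    Pru Ω (fun a => s < Pru Λ (R a)) ≤ q / s := by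
  classical
  rw [le_div_iff₀' hs]
  calc s * Pru Ω (fun a => s < Pru Λ (R a)) ≤ Exu Ω (fun a => Pru Λ (R a)) :=
        mul_Pru_lt_le_Exu (fun a _ => by
          rw [Pru_eq_Exu]; exact Exu_nonneg fun b _ => by split_ifs <;> norm_num) s
    _ = Exu Λ (fun b => Pru Ω (fun a => R a b)) := by simp only [Pru_eq_Exu, Exu_comm Ω]
    _ ≤ Exu Λ (fun _ => q) := Exu_mono h
    _ ≤ q := Exu_const_le hq Λ

lemma Varu_le_Exu_sq_sub (Ω : Finset α) (f : α → ℝ) (c : ℝ) :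
    Varu Ω f ≤ Exu Ω (fun a => (f a - c) ^ 2) := by
  rcases Ω.eq_empty_or_nonempty with rfl | hΩ
  · simp [Varu, Exu]
  have hexpand : Exu Ω (fun a => (f a - c) ^ 2) = Varu Ω f + (Exu Ω f - c) ^ 2 :=
    calc Exu Ω (fun a => (f a - c) ^ 2)
        = Exu Ω (fun a => (f a - Exu Ω f) ^ 2 +
            (2 * (Exu Ω f - c) * (f a - Exu Ω f) + (Exu Ω f - c) ^ 2)) :=
          Exu_congr fun a _ => by ring
      _ = Varu Ω f + (Exu Ω f - c) ^ 2 := by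
          rw [Exu_add, Exu_add, Exu_mul_left, Exu_sub_const hΩ, Exu_const hΩ, sub_self, mul_zero,
            zero_add, Varu]
  linarith [sq_nonneg (Exu Ω f - c)]

lemma Exu_condExpU (Ω : Finset α) (f : α → ℝ) (g : α → β) :
    Exu Ω (condExpU Ω f g) = Exu Ω f := by
  classical
  have hmaps : ∀ a ∈ Ω, g a ∈ Ω.image g := fun a ha => mem_image_of_mem g ha
  rw [Exu, Exu, ← sum_fiberwise_of_maps_to hmaps, ← sum_fiberwise_of_maps_to hmaps]
  congr 1
  refine sum_congr rfl fun y hy => ?_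
  have hfibre : Ω.filter (g · = y) |>.Nonempty := by
    obtain ⟨a, ha, rfl⟩ := mem_image.1 hy
    exact ⟨a, mem_filter.2 ⟨ha, rfl⟩⟩
  have hcond : ∀ a ∈ Ω.filter (g · = y), condExpU Ω f g a = Exu (Ω.filter (g · = y)) f := by
    intro a ha
    simp only [condExpU, (mem_filter.1 ha).2]
  rw [sum_congr rfl hcond, sum_const, nsmul_eq_mul, Exu,
    mul_div_cancel₀ _ (Nat.cast_ne_zero.2 hfibre.card_ne_zero)]

lemma Exu_sq_condExpU_sub_le (Ω : Finset α) (f : α → ℝ) (g : α → β) (c : ℝ) :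
    Exu Ω (fun a => (condExpU Ω f g a - c) ^ 2) ≤ Exu Ω (fun a => (f a - c) ^ 2) := by
  classical
  rw [← Exu_condExpU Ω (fun a => (f a - c) ^ 2) g]
  refine Exu_mono fun a ha => ?_
  simp only [condExpU]
  have hfibre : (Ω.filter fun b => g b = g a).Nonempty := ⟨a, mem_filter.2 ⟨ha, rfl⟩⟩
  rw [← Exu_sub_const hfibre]
  exact sq_Exu_le _ _

lemma Exu_sigma {A : Finset ι} {B : ι → Finset κ} {b : ℕ}
    (hB : ∀ i ∈ A, #(B i) = b) (f : (Σ _ : ι, κ) → ℝ) :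
    Exu (A.sigma B) f = Exu A (fun i => Exu (B i) (fun z => f ⟨i, z⟩)) := by
  have hcard : #(A.sigma B) = b * #A := by
    rw [card_sigma, sum_congr rfl hB, sum_const, smul_eq_mul, mul_comm]
  have hfibre : ∀ i ∈ A, Exu (B i) (fun z => f ⟨i, z⟩) = (∑ z ∈ B i, f ⟨i, z⟩) / b := fun i hi => by
    rw [Exu, hB i hi]
  rw [Exu_congr hfibre, Exu, Exu, sum_sigma, hcard, ← sum_div, div_div, Nat.cast_mul]

lemma condExpU_sigma {A : Finset ι} {B : ι → Finset κ} {b : ℕ}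
    (hB : ∀ i ∈ A, #(B i) = b) (f : (Σ _ : ι, κ) → ℝ) (g : ι → β) (ω : Σ _ : ι, κ) :
    condExpU (A.sigma B) f (fun ω => g ω.1) ω =
      condExpU A (fun i => Exu (B i) (fun z => f ⟨i, z⟩)) g ω.1 := by
  classical
  have hfilter : (A.sigma B).filter (fun ω' => g ω'.1 = g ω.1) =
      (A.filter fun i => g i = g ω.1).sigma B := by
    ext ⟨i, z⟩
    simp only [mem_filter, mem_sigma, and_right_comm]
  rw [condExpU, condExpU, ← Exu_sigma fun i hi => hB i (mem_filter.1 hi).1, ← hfilter]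

-- `g ω.1` is coarser than `ω.1`, so Jensen's inequality compares `E[f | g]` with `E[f | ω.1]`.
lemma Varu_condExpU_sigma_le {A : Finset ι} {B : ι → Finset κ} {b : ℕ}
    (hB : ∀ i ∈ A, #(B i) = b) (f : (Σ _ : ι, κ) → ℝ) (g : ι → β) (c : ℝ) :
    Varu (A.sigma B) (condExpU (A.sigma B) f (fun ω => g ω.1)) ≤
      Exu A (fun i => (Exu (B i) (fun z => f ⟨i, z⟩) - c) ^ 2) := by
  set F : ι → ℝ := fun i => Exu (B i) (fun z => f ⟨i, z⟩) with hF
  calc Varu (A.sigma B) (condExpU (A.sigma B) f (fun ω => g ω.1))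
      ≤ Exu (A.sigma B) (fun ω => (condExpU A F g ω.1 - c) ^ 2) := by
        simp only [hF, ← condExpU_sigma hB]
        exact Varu_le_Exu_sq_sub _ _ c
    _ = Exu A (fun i => Exu (B i) (fun _ => (condExpU A F g i - c) ^ 2)) := Exu_sigma hB _
    _ ≤ Exu A (fun i => (condExpU A F g i - c) ^ 2) :=
        Exu_mono fun i _ => Exu_const_le (sq_nonneg _) (B i)
    _ ≤ Exu A (fun i => (F i - c) ^ 2) := Exu_sq_condExpU_sub_le A F g c

lemma abs_Exu_le {Ω : Finset α} {f : α → ℝ} {x : ℝ} (hx : 0 ≤ x)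
    (h : ∀ a ∈ Ω, |f a| ≤ x) : |Exu Ω f| ≤ x := by
  rw [Exu, abs_div, Nat.abs_cast]
  exact (div_le_div_of_nonneg_right (abs_sum_le_sum_abs f Ω) (Nat.cast_nonneg _)).trans
    ((Exu_mono h).trans (Exu_const_le hx Ω))

lemma abs_Exu_sub_le_div {Ω : Finset α} {f : α → ℝ} {c x y : ℝ} (hy : 0 < y)
    (hcard : y ≤ #Ω) (h : |∑ a ∈ Ω, f a - #Ω * c| ≤ x) : |Exu Ω f - c| ≤ x / y := by
  have hΩ : (0 : ℝ) < #Ω := hy.trans_le hcard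
  have hx : 0 ≤ x := (abs_nonneg _).trans h
  rw [Exu, div_sub' hΩ.ne', abs_div, abs_of_pos hΩ]
  gcongr

lemma Exu_product (A : Finset α) (B : Finset β) (f : α × β → ℝ) :
    Exu (A ×ˢ B) f = Exu A (fun x => Exu B (fun y => f (x, y))) := by
  simp only [Exu, sum_product, card_product, ← sum_div, Nat.cast_mul]
  rw [div_div, mul_comm]

lemma Exu_product_increment_mul {A B : Finset α} (hA : A.Nonempty) (hB : B.Nonempty)
    (U V : α → ℝ) :
    Exu (A ×ˢ B) (fun z => (U z.2 - U z.1) * (V z.2 - V z.1)) =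
      Exu A (fun x => U x * V x) + Exu B (fun y => U y * V y) -
        Exu A U * Exu B V - Exu B U * Exu A V := by
  have hinner : ∀ x ∈ A, Exu B (fun y => (U y - U x) * (V y - V x)) =
      U x * V x + (Exu B (fun y => U y * V y) + (-Exu B V * U x + -Exu B U * V x)) := fun x _ =>
    calc Exu B (fun y => (U y - U x) * (V y - V x))
        = Exu B (fun y => U x * V x + (U y * V y + (-U x * V y + -V x * U y))) :=
          Exu_congr fun y _ => by ring
      _ = _ := by
          simp only [Exu_add, Exu_const hB, Exu_mul_left]
          ring
  rw [Exu_product, Exu_congr hinner]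
  simp only [Exu_add, Exu_const hA, Exu_mul_left]
  ring

lemma abs_Exu_increment_mul_sub_le {A B : Finset α} (hA : A.Nonempty)
    (hB : B.Nonempty) {U V : α → ℝ} {m q s : ℝ}
    (hUVA : |Exu A (fun x => U x * V x) - m| ≤ q) (hUVB : |Exu B (fun x => U x * V x) - m| ≤ q)
    (hUA : |Exu A U| ≤ s) (hUB : |Exu B U| ≤ s) (hVA : |Exu A V| ≤ s) (hVB : |Exu B V| ≤ s) :
    |Exu (A ×ˢ B) (fun z => (U z.2 - U z.1) * (V z.2 - V z.1)) - 2 * m| ≤ 2 * q + 2 * s ^ 2 := by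
  have hs : 0 ≤ s := (abs_nonneg _).trans hUA
  have hAB : |Exu A U * Exu B V| ≤ s ^ 2 := by rw [abs_mul, sq]; gcongr
  have hBA : |Exu B U * Exu A V| ≤ s ^ 2 := by rw [abs_mul, sq]; gcongr
  rw [Exu_product_increment_mul hA hB]
  rw [abs_le] at *
  constructor <;> linarith

lemma abs_Exu_noisy_increment_mul_sub_le (A B : Finset α) {U V : α → ℝ}
    {ξ : α × α → ℝ} {D : ℝ} (hD : 0 ≤ D) (hU : ∀ x, |U x| ≤ D) (hV : ∀ x, |V x| ≤ D)
    (hξ : ∀ z, |ξ z| ≤ 1) :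
    |Exu (A ×ˢ B) (fun z => (U z.2 - U z.1 - ξ z) * (V z.2 - V z.1 - ξ z)) -
      Exu (A ×ˢ B) (fun z => (U z.2 - U z.1) * (V z.2 - V z.1))| ≤ 1 + 4 * D := by
  set η : α × α → ℝ := fun z => ξ z ^ 2 - ξ z * ((U z.2 - U z.1) + (V z.2 - V z.1)) with hη
  have hsplit : Exu (A ×ˢ B) (fun z => (U z.2 - U z.1 - ξ z) * (V z.2 - V z.1 - ξ z)) =
      Exu (A ×ˢ B) (fun z => (U z.2 - U z.1) * (V z.2 - V z.1)) + Exu (A ×ˢ B) η := by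
    rw [← Exu_add]
    exact Exu_congr fun z _ => by simp only [hη]; ring
  rw [hsplit, add_sub_cancel_left]
  refine abs_Exu_le (by positivity) fun z _ => ?_
  have hincrement : |(U z.2 - U z.1) + (V z.2 - V z.1)| ≤ 4 * D := by
    have h₁ := abs_le.1 (hU z.1); have h₂ := abs_le.1 (hU z.2)
    have h₃ := abs_le.1 (hV z.1); have h₄ := abs_le.1 (hV z.2)
    exact abs_le.2 ⟨by linarith, by linarith⟩
  calc |η z| ≤ |ξ z| ^ 2 + |ξ z| * |(U z.2 - U z.1) + (V z.2 - V z.1)| := by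
        rw [← abs_pow, ← abs_mul]
        exact abs_sub _ _
    _ ≤ 1 ^ 2 + 1 * (4 * D) := by gcongr <;> exact hξ z
    _ = 1 + 4 * D := by ring

end UniformProbability

lemma bernoulli_mgf_le {p : ℝ} (hp : p ∈ Set.Icc (0 : ℝ) 1) (s : ℝ) :
    p * Real.exp (s * (1 - p)) + (1 - p) * Real.exp (s * -p) ≤ Real.exp (s ^ 2 / 8) := by
  set μ := bernoulliMeasure (1 - p) (-p) ⟨p, hp⟩
  have hmean : ∫ x, id x ∂μ = 0 := by
    rw [integral_bernoulliMeasure]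
    simp only [id, smul_eq_mul]
    ring
  have hbound : ∀ᵐ x ∂μ, id x ∈ Set.Icc (-p) (1 - p) :=
    (mem_ae_iff_prob_eq_one measurableSet_Icc).2 <|
      bernoulliMeasure_apply_of_mem_of_mem _ measurableSet_Icc
        ⟨by linarith, le_rfl⟩ ⟨le_rfl, by linarith⟩
  have hmgf := (hasSubgaussianMGF_of_mem_Icc_of_integral_eq_zero measurable_id.aemeasurable
    hbound hmean).mgf_le s
  have hvar : (((‖1 - p - -p‖₊ / 2) ^ 2 : NNReal) : ℝ) * s ^ 2 / 2 = s ^ 2 / 8 := by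
    push_cast
    norm_num
    ring
  rwa [mgf, integral_bernoulliMeasure, hvar] at hmgf

section BernoulliSubset

variable {α β ι : Type*} {p : ℝ}

/-- The expectation of `f G` for a random `G ⊆ E` which contains each element of `E` independently
with probability `p`. -/
def bernoulliExp (p : ℝ) (E : Finset α) (f : Finset α → ℝ) : ℝ :=
  ∑ G ∈ E.powerset, p ^ #G * (1 - p) ^ (#E - #G) * f G

/-- The probability of the event `A` for the random subset of `E` described at `bernoulliExp`. -/
def bernoulliProb (p : ℝ) (E : Finset α) (A : Finset α → Prop) : ℝ := by
  classical exact bernoulliExp p E (fun G => if A G then 1 else 0)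

/-- The centred indicator `1[e ∈ G] - p`, written `ξ e` in the comments. -/
def centredInd [DecidableEq α] (p : ℝ) (e : α) (G : Finset α) : ℝ := (if e ∈ G then 1 else 0) - p

/-- The coefficients `c` are predictable when the elements are revealed in the order of their
ranks `r`: `c e G` does not depend on the elements of `G` of rank at least `r e`. -/
def Predictable [DecidableEq α] [LE β] (r : α → β) (c : α → Finset α → ℝ) : Prop :=
  ∀ e f G, r e ≤ r f → c e (insert f G) = c e G

lemma bernoulliExp_mono (hp : p ∈ Set.Icc (0 : ℝ) 1) {E : Finset α} {f g : Finset α → ℝ}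
    (h : ∀ G ⊆ E, f G ≤ g G) : bernoulliExp p E f ≤ bernoulliExp p E g :=
  sum_le_sum fun G hG => mul_le_mul_of_nonneg_left (h G (mem_powerset.1 hG)) <|
    mul_nonneg (pow_nonneg hp.1 _) (pow_nonneg (sub_nonneg.2 hp.2) _)

lemma bernoulliExp_mul_const (E : Finset α) (f : Finset α → ℝ) (c : ℝ) :
    bernoulliExp p E (fun G => f G * c) = bernoulliExp p E f * c := by
  simp only [bernoulliExp, sum_mul, mul_assoc]

lemma bernoulliExp_add (E : Finset α) (f g : Finset α → ℝ) :
    bernoulliExp p E (fun G => f G + g G) = bernoulliExp p E f + bernoulliExp p E g := by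
  simp only [bernoulliExp, mul_add, sum_add_distrib]

lemma bernoulliExp_sum (E : Finset α) (s : Finset ι) (f : ι → Finset α → ℝ) :
    bernoulliExp p E (fun G => ∑ i ∈ s, f i G) = ∑ i ∈ s, bernoulliExp p E (f i) := by
  simp only [bernoulliExp, mul_sum]
  exact sum_comm

lemma bernoulliExp_insert [DecidableEq α] {E : Finset α} {e : α} (he : e ∉ E)
    (f : Finset α → ℝ) : bernoulliExp p (insert e E) f =
      bernoulliExp p E (fun G => p * f (insert e G) + (1 - p) * f G) := by
  rw [bernoulliExp, sum_powerset_insert he, add_comm, ← sum_add_distrib]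
  refine sum_congr rfl fun G hG => ?_
  have hGE := mem_powerset.1 hG
  rw [card_insert_of_notMem he, card_insert_of_notMem fun h => he (hGE h),
    Nat.add_sub_add_right, Nat.sub_add_comm (card_le_card hGE)]
  ring

lemma bernoulliProb_mono (hp : p ∈ Set.Icc (0 : ℝ) 1) {E : Finset α} {A B : Finset α → Prop}
    (h : ∀ G ⊆ E, A G → B G) : bernoulliProb p E A ≤ bernoulliProb p E B := by
  classical
  refine bernoulliExp_mono hp fun G hG => ?_
  have := h G hG
  split_ifs <;> simp_all

lemma bernoulliProb_or_le (hp : p ∈ Set.Icc (0 : ℝ) 1) (E : Finset α) (A B : Finset α → Prop) :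
    bernoulliProb p E (fun G => A G ∨ B G) ≤ bernoulliProb p E A + bernoulliProb p E B := by
  classical
  rw [bernoulliProb, bernoulliProb, bernoulliProb, ← bernoulliExp_add]
  refine bernoulliExp_mono hp fun G _ => ?_
  by_cases hA : A G <;> by_cases hB : B G <;> simp [hA, hB]

lemma bernoulliProb_exists_le (hp : p ∈ Set.Icc (0 : ℝ) 1) {E : Finset α} {s : Finset ι}
    {A : ι → Finset α → Prop} {q : ℝ} (h : ∀ i ∈ s, bernoulliProb p E (A i) ≤ q) :
    bernoulliProb p E (fun G => ∃ i ∈ s, A i G) ≤ #s * q := by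
  classical
  refine le_trans ?_ ((sum_le_card_nsmul s _ q h).trans_eq (nsmul_eq_mul _ _))
  simp only [bernoulliProb, ← bernoulliExp_sum]
  refine bernoulliExp_mono hp fun G _ => ?_
  have hnonneg : ∀ i ∈ s, (0 : ℝ) ≤ if A i G then 1 else 0 := fun i _ => by
    split_ifs <;> norm_num
  split_ifs with hex
  · obtain ⟨i, hi, hA⟩ := hex
    simpa [hA] using single_le_sum hnonneg hi
  · exact sum_nonneg hnonneg

lemma bernoulliProb_lt_le_exp_mul (hp : p ∈ Set.Icc (0 : ℝ) 1) (E : Finset α)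
    (X : Finset α → ℝ) (a : ℝ) {l : ℝ} (hl : 0 ≤ l) :
    bernoulliProb p E (fun G => a < X G) ≤
      bernoulliExp p E (fun G => Real.exp (l * X G)) * Real.exp (-(l * a)) := by
  rw [← bernoulliExp_mul_const]
  refine bernoulliExp_mono hp fun G _ => ?_
  rw [← Real.exp_add]
  split_ifs with h
  · exact Real.one_le_exp (by nlinarith)
  · exact (Real.exp_pos _).le

variable [DecidableEq α]

lemma centredInd_insert_self (e : α) (G : Finset α) : centredInd p e (insert e G) = 1 - p := by
  simp [centredInd]

lemma centredInd_of_notMem {e : α} {G : Finset α} (h : e ∉ G) : centredInd p e G = -p := by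
  simp [centredInd, h]

lemma centredInd_insert_of_ne {e f : α} (h : e ≠ f) (G : Finset α) :
    centredInd p e (insert f G) = centredInd p e G := by
  simp [centredInd, h]

lemma abs_centredInd_le_one (hp : p ∈ Set.Icc (0 : ℝ) 1) (e : α) (G : Finset α) :
    |centredInd p e G| ≤ 1 := by
  obtain ⟨h0, h1⟩ := hp
  rw [centredInd, abs_le]
  split_ifs <;> constructor <;> linarith

lemma centredInd_sq (e : α) (G : Finset α) :
    centredInd p e G ^ 2 = (1 - 2 * p) * centredInd p e G + p * (1 - p) := by
  rw [centredInd]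
  split_ifs <;> ring

lemma bernoulliExp_exp_martingale_le [LinearOrder β] (hp : p ∈ Set.Icc (0 : ℝ) 1) {r : α → β}
    {c : α → Finset α → ℝ} (hpred : Predictable r c) {t : α → ℝ} (hc : ∀ e G, |c e G| ≤ t e)
    (E : Finset α) (l : ℝ) :
    bernoulliExp p E (fun G => Real.exp (l * ∑ e ∈ E, c e G * centredInd p e G)) ≤
      Real.exp (l ^ 2 / 8 * ∑ e ∈ E, t e ^ 2) := by
  induction E using Finset.induction_on_max_value r with
  | empty => simp [bernoulliExp]
  | insert a E ha hmax ih =>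
    have hstep : ∀ G ⊆ E,
        p * Real.exp (l * ∑ e ∈ insert a E, c e (insert a G) * centredInd p e (insert a G)) +
          (1 - p) * Real.exp (l * ∑ e ∈ insert a E, c e G * centredInd p e G) ≤
        Real.exp (l * ∑ e ∈ E, c e G * centredInd p e G) * Real.exp (l ^ 2 / 8 * t a ^ 2) := by
      intro G hG
      have hpast : ∑ e ∈ E, c e (insert a G) * centredInd p e (insert a G) =
          ∑ e ∈ E, c e G * centredInd p e G :=
        sum_congr rfl fun e he => by
          rw [hpred e a G (hmax e he), centredInd_insert_of_ne (ne_of_mem_of_not_mem he ha)]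
      have hcoeff : (l * c a G) ^ 2 / 8 ≤ l ^ 2 / 8 * t a ^ 2 := by
        have := sq_le_sq' (abs_le.1 (hc a G)).1 (abs_le.1 (hc a G)).2
        nlinarith [mul_le_mul_of_nonneg_left this (sq_nonneg l)]
      rw [sum_insert ha, sum_insert ha, hpast, hpred a a G le_rfl, centredInd_insert_self,
        centredInd_of_notMem fun h => ha (hG h), mul_add, mul_add, Real.exp_add, Real.exp_add,
        ← mul_assoc l, ← mul_assoc l]
      calc _ = Real.exp (l * ∑ e ∈ E, c e G * centredInd p e G) *
            (p * Real.exp (l * c a G * (1 - p)) + (1 - p) * Real.exp (l * c a G * -p)) := by ring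
        _ ≤ _ := by
          gcongr
          exact (bernoulli_mgf_le hp _).trans (Real.exp_le_exp.2 hcoeff)
    rw [bernoulliExp_insert ha, sum_insert ha, add_comm, mul_add, Real.exp_add]
    refine (bernoulliExp_mono hp hstep).trans ?_
    rw [bernoulliExp_mul_const]
    gcongr

-- The Chernoff bound is optimal at `l = 4 * a / V`.
lemma bernoulliProb_martingale_gt_le [LinearOrder β] (hp : p ∈ Set.Icc (0 : ℝ) 1) {r : α → β}
    {c : α → Finset α → ℝ} (hpred : Predictable r c) {t : α → ℝ} (hc : ∀ e G, |c e G| ≤ t e)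
    {E : Finset α} {a V : ℝ} (ha : 0 ≤ a) (hV : ∑ e ∈ E, t e ^ 2 ≤ V) :
    bernoulliProb p E (fun G => a < ∑ e ∈ E, c e G * centredInd p e G) ≤
      Real.exp (-(2 * a ^ 2 / V)) := by
  have hV0 : 0 ≤ V := (sum_nonneg fun e _ => sq_nonneg (t e)).trans hV
  set l := 4 * a / V with hl
  calc bernoulliProb p E (fun G => a < ∑ e ∈ E, c e G * centredInd p e G)
      ≤ Real.exp (l ^ 2 / 8 * ∑ e ∈ E, t e ^ 2) * Real.exp (-(l * a)) :=
        (bernoulliProb_lt_le_exp_mul hp E _ a (by positivity)).trans <|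
          mul_le_mul_of_nonneg_right (bernoulliExp_exp_martingale_le hp hpred hc E l)
            (Real.exp_pos _).le
    _ ≤ Real.exp (l ^ 2 / 8 * V) * Real.exp (-(l * a)) := by gcongr
    _ = Real.exp (-(2 * a ^ 2 / V)) := by
        rw [← Real.exp_add, hl]
        congr 1
        rcases eq_or_ne V 0 with rfl | hV'
        · simp
        · field_simp
          ring

lemma bernoulliProb_abs_martingale_gt_le [LinearOrder β] (hp : p ∈ Set.Icc (0 : ℝ) 1) {r : α → β}
    {c : α → Finset α → ℝ} (hpred : Predictable r c) {t : α → ℝ} (hc : ∀ e G, |c e G| ≤ t e)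
    {E : Finset α} {a V : ℝ} (ha : 0 ≤ a) (hV : ∑ e ∈ E, t e ^ 2 ≤ V) :
    bernoulliProb p E (fun G => a < |∑ e ∈ E, c e G * centredInd p e G|) ≤
      2 * Real.exp (-(2 * a ^ 2 / V)) := by
  have hpred_neg : Predictable r (fun e G => -c e G) := fun e f G h =>
    congrArg Neg.neg (hpred e f G h)
  have hupper := bernoulliProb_martingale_gt_le hp hpred hc ha hV
  have hlower :=
    bernoulliProb_martingale_gt_le hp hpred_neg (fun e G => by simpa using hc e G) ha hV
  rw [two_mul]
  refine (bernoulliProb_mono hp fun G _ h => ?_).trans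
    ((bernoulliProb_or_le hp E _ _).trans (add_le_add hupper hlower))
  simpa only [neg_mul, sum_neg_distrib] using lt_abs.1 h

lemma bernoulliProb_abs_linear_gt_le (hp : p ∈ Set.Icc (0 : ℝ) 1) {E : Finset α} {c : α → ℝ}
    {a V : ℝ} (ha : 0 ≤ a) (hV : ∑ e ∈ E, c e ^ 2 ≤ V) :
    bernoulliProb p E (fun G => a < |∑ e ∈ E, c e * centredInd p e G|) ≤
      2 * Real.exp (-(2 * a ^ 2 / V)) :=
  bernoulliProb_abs_martingale_gt_le (r := fun _ => ()) hp (fun _ _ _ _ => rfl)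
    (t := fun e => |c e|) (fun _ _ => le_rfl) ha (by simpa only [sq_abs] using hV)

-- The coefficient of `ξ f` is a linear form in elements of smaller rank. It is truncated at `t`, so
-- that Azuma's inequality applies, and rarely exceeds `t`.
lemma bernoulliProb_abs_quadratic_gt_le_of_lt [LinearOrder β] (hp : p ∈ Set.Icc (0 : ℝ) 1)
    {r : α → β} {E : Finset α} {A : α → α → ℝ} (hA : ∀ e f, r f ≤ r e → A e f = 0) {a t B m : ℝ}
    (ha : 0 ≤ a) (ht : 0 ≤ t) (hE : #E ≤ m) (hB : ∀ f ∈ E, ∑ e ∈ E, A e f ^ 2 ≤ B) :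
    bernoulliProb p E
        (fun G => a < |∑ f ∈ E, (∑ e ∈ E, A e f * centredInd p e G) * centredInd p f G|) ≤
      2 * Real.exp (-(2 * a ^ 2 / (m * t ^ 2))) + m * (2 * Real.exp (-(2 * t ^ 2 / B))) := by
  set c : α → Finset α → ℝ := fun f G => ∑ e ∈ E, A e f * centredInd p e G
  set c' : α → Finset α → ℝ := fun f G => if |c f G| ≤ t then c f G else 0 with hc'
  have hpred : Predictable r c := by
    intro f g G hfg
    refine sum_congr rfl fun e _ => ?_
    rcases eq_or_ne e g with rfl | hne
    · simp [hA e f hfg]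
    · rw [centredInd_insert_of_ne hne]
  have hpred' : Predictable r c' := fun f g G hfg => by simp only [hc', hpred f g G hfg]
  have hbound : ∀ f G, |c' f G| ≤ t := by
    intro f G
    simp only [hc']
    split_ifs with h
    · exact h
    · simpa using ht
  have htrunc : bernoulliProb p E (fun G => a < |∑ f ∈ E, c' f G * centredInd p f G|) ≤
      2 * Real.exp (-(2 * a ^ 2 / (m * t ^ 2))) := by
    refine bernoulliProb_abs_martingale_gt_le hp hpred' (t := fun _ => t) hbound ha ?_
    rw [sum_const, nsmul_eq_mul]
    gcongr
  have hlarge : bernoulliProb p E (fun G => ∃ f ∈ E, t < |c f G|) ≤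
      m * (2 * Real.exp (-(2 * t ^ 2 / B))) := by
    refine (bernoulliProb_exists_le hp fun f hf =>
      bernoulliProb_abs_linear_gt_le hp ht (hB f hf)).trans ?_
    gcongr
  refine (bernoulliProb_mono hp fun G _ hG => ?_).trans
    ((bernoulliProb_or_le hp E _ _).trans (add_le_add htrunc hlarge))
  by_contra! hsmall
  have htrunc_eq : ∀ f ∈ E, c' f G = c f G := fun f hf => if_pos (hsmall.2 f hf)
  rw [sum_congr rfl fun f hf => by rw [htrunc_eq f hf]] at hsmall
  exact hsmall.1.not_gt hG

-- With `r` any injective ranking, `A e f + A f e` for `r e < r f` describes the same form.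
lemma bernoulliProb_abs_quadratic_gt_le (hp : p ∈ Set.Icc (0 : ℝ) 1) {E : Finset α}
    {A : α → α → ℝ} (hdiag : ∀ e, A e e = 0) {a t B m : ℝ} (ha : 0 ≤ a) (ht : 0 ≤ t)
    (hE : #E ≤ m) (hB : ∀ f ∈ E, ∑ e ∈ E, (A e f + A f e) ^ 2 ≤ B) :
    bernoulliProb p E
        (fun G => a < |∑ e ∈ E, ∑ f ∈ E, A e f * centredInd p e G * centredInd p f G|) ≤
      2 * Real.exp (-(2 * a ^ 2 / (m * t ^ 2))) + m * (2 * Real.exp (-(2 * t ^ 2 / B))) := by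
  classical
  set r : α ↪ Cardinal := embeddingToCardinal
  set A' : α → α → ℝ := fun e f => if r e < r f then A e f + A f e else 0 with hA'
  have hsplit : ∀ e f, A e f =
      (if r e < r f then A e f else 0) + if r f < r e then A e f else 0 := by
    intro e f
    rcases lt_trichotomy (r e) (r f) with h | h | h
    · simp [h, h.not_gt]
    · obtain rfl := r.injective h
      simp [hdiag]
    · simp [h, h.not_gt]
  have hform : ∀ G, ∑ e ∈ E, ∑ f ∈ E, A e f * centredInd p e G * centredInd p f G =
      ∑ f ∈ E, (∑ e ∈ E, A' e f * centredInd p e G) * centredInd p f G := by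
    intro G
    calc ∑ e ∈ E, ∑ f ∈ E, A e f * centredInd p e G * centredInd p f G
        = (∑ e ∈ E, ∑ f ∈ E,
              (if r e < r f then A e f else 0) * centredInd p e G * centredInd p f G) +
            ∑ e ∈ E, ∑ f ∈ E,
              (if r f < r e then A e f else 0) * centredInd p e G * centredInd p f G := by
          simp only [← sum_add_distrib, ← add_mul, ← hsplit]
      _ = ∑ f ∈ E, (∑ e ∈ E, A' e f * centredInd p e G) * centredInd p f G := by
          rw [sum_comm, ← sum_add_distrib]
          refine sum_congr rfl fun f _ => ?_
          rw [← sum_add_distrib, sum_mul]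
          refine sum_congr rfl fun e _ => ?_
          simp only [hA']
          split_ifs <;> ring
  simp only [hform]
  refine bernoulliProb_abs_quadratic_gt_le_of_lt hp (r := r) (fun e f h => if_neg h.not_gt) ha ht hE
    fun f hf => le_trans (sum_le_sum fun e _ => ?_) (hB f hf)
  split_ifs
  · exact le_rfl
  · simpa using sq_nonneg (A e f + A f e)

end BernoulliSubset

section FixedSizeSubset

lemma factorial_mul_pow_le_factorial_mul_pow_self (a j : ℕ) :
    a.factorial * a ^ j ≤ j.factorial * a ^ a := by
  rcases le_total a j with h | h
  · calc a.factorial * a ^ j = a.factorial * a ^ (j - a) * a ^ a := by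
          rw [mul_assoc, ← pow_add, Nat.sub_add_cancel h]
      _ ≤ j.factorial * a ^ a :=
          Nat.mul_le_mul_right _ (Nat.factorial_mul_pow_sub_le_factorial h)
  · calc a.factorial * a ^ j = j.factorial * a.descFactorial (a - j) * a ^ j := by
          rw [← Nat.factorial_mul_descFactorial (Nat.sub_le a j), Nat.sub_sub_self h]
      _ ≤ j.factorial * a ^ (a - j) * a ^ j := by
          gcongr
          exact Nat.descFactorial_le_pow _ _
      _ = j.factorial * a ^ a := by rw [mul_assoc, ← pow_add, Nat.sub_add_cancel h]

-- The mode of a binomial distribution with integer mean is its mean.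
lemma choose_mul_pow_mul_pow_le {m M j : ℕ} (hM : M ≤ m) (hj : j ≤ m) :
    m.choose j * (M ^ j * (m - M) ^ (m - j)) ≤ m.choose M * (M ^ M * (m - M) ^ (m - M)) := by
  have hsuccess := factorial_mul_pow_le_factorial_mul_pow_self M j
  have hfailure := factorial_mul_pow_le_factorial_mul_pow_self (m - M) (m - j)
  have hchoose_M := Nat.choose_mul_factorial_mul_factorial hM
  have hchoose_j := Nat.choose_mul_factorial_mul_factorial hj
  have hpos : 0 < j.factorial * (m - j).factorial * (M.factorial * (m - M).factorial) := by
    positivity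
  refine Nat.le_of_mul_le_mul_left ?_ hpos
  calc _ = (m.choose j * j.factorial * (m - j).factorial) *
        ((M.factorial * M ^ j) * ((m - M).factorial * (m - M) ^ (m - j))) := by ring
    _ ≤ (m.choose j * j.factorial * (m - j).factorial) *
        ((j.factorial * M ^ M) * ((m - j).factorial * (m - M) ^ (m - M))) := by gcongr
    _ = (m.choose M * M.factorial * (m - M).factorial) *
        ((j.factorial * M ^ M) * ((m - j).factorial * (m - M) ^ (m - M))) := by
      rw [hchoose_M, hchoose_j]
    _ = _ := by ring

lemma one_le_add_one_mul_binomial_mean {m M : ℕ} (hM : M ≤ m) :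
    1 ≤ ((m : ℝ) + 1) * (m.choose M * (((M : ℝ) / m) ^ M * (1 - (M : ℝ) / m) ^ (m - M))) := by
  rcases m.eq_zero_or_pos with rfl | hm
  · simp [Nat.le_zero.1 hM]
  have hm' : (0 : ℝ) < m := by exact_mod_cast hm
  have hweight : ∀ j ≤ m, ((M : ℝ) / m) ^ j * (1 - (M : ℝ) / m) ^ (m - j) =
      ((M : ℝ) ^ j * ((m - M : ℕ) : ℝ) ^ (m - j)) / (m : ℝ) ^ m := by
    intro j hj
    rw [one_sub_div hm'.ne', ← Nat.cast_sub hM, div_pow, div_pow, div_mul_div_comm, ← pow_add,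
      Nat.add_sub_cancel' hj]
  have hterm : ∀ j ∈ range (m + 1),
      ((M : ℝ) / m) ^ j * (1 - (M : ℝ) / m) ^ (m - j) * (m.choose j : ℝ) ≤
      m.choose M * (((M : ℝ) / m) ^ M * (1 - (M : ℝ) / m) ^ (m - M)) := by
    intro j hj
    have hj' : j ≤ m := mem_range_succ_iff.1 hj
    rw [hweight j hj', hweight M hM, mul_comm, ← mul_div_assoc, ← mul_div_assoc]
    gcongr ?_ / _
    exact_mod_cast choose_mul_pow_mul_pow_le hM hj'
  simpa [← add_pow] using sum_le_sum hterm

lemma Pru_powersetCard_le {α : Type*} (E : Finset α) {M : ℕ} (hM : M ≤ #E)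
    (A : Finset α → Prop) :
    Pru (E.powersetCard M) A ≤ (#E + 1) * bernoulliProb ((M : ℝ) / #E) E A := by
  classical
  set p : ℝ := (M : ℝ) / #E
  have hp1 : p ≤ 1 := div_le_one_of_le₀ (by exact_mod_cast hM) (Nat.cast_nonneg _)
  set w : ℝ := p ^ M * (1 - p) ^ (#E - M)
  have hw0 : 0 ≤ w := mul_nonneg (by positivity) (pow_nonneg (sub_nonneg.2 hp1) _)
  have hprob : (#{G ∈ E.powersetCard M | A G} : ℝ) * w ≤ bernoulliProb p E A := by
    calc (#{G ∈ E.powersetCard M | A G} : ℝ) * w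
        = ∑ G ∈ E.powersetCard M, p ^ #G * (1 - p) ^ (#E - #G) * (if A G then 1 else 0) := by
          rw [← nsmul_eq_mul, ← sum_const, sum_filter]
          refine sum_congr rfl fun G hG => ?_
          rw [(mem_powersetCard.1 hG).2, mul_ite, mul_one, mul_zero]
      _ ≤ bernoulliProb p E A := by
          refine sum_le_sum_of_subset_of_nonneg
            (fun G hG => mem_powerset.2 (mem_powersetCard.1 hG).1) fun G _ _ => ?_
          have := sub_nonneg.2 hp1
          positivity
  have hchoose : (0 : ℝ) < (#E).choose M := by exact_mod_cast Nat.choose_pos hM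
  have hmean := one_le_add_one_mul_binomial_mean hM
  rw [Pru, card_powersetCard, div_le_iff₀ hchoose]
  calc (#{G ∈ E.powersetCard M | A G} : ℝ)
      ≤ #{G ∈ E.powersetCard M | A G} * ((#E + 1) * ((#E).choose M * w)) :=
        le_mul_of_one_le_right (Nat.cast_nonneg _) hmean
    _ = (#E + 1) * (#{G ∈ E.powersetCard M | A G} * w) * (#E).choose M := by ring
    _ ≤ (#E + 1) * bernoulliProb p E A * (#E).choose M := by gcongr

end FixedSizeSubset

section WeightedDegree

variable {n : ℕ} {p : ℝ}

lemma mem_completeEdges {u v : Fin n} : s(u, v) ∈ completeEdges n ↔ u ≠ v := by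
  simp [completeEdges]

lemma card_completeEdges (n : ℕ) : (#(completeEdges n) : ℝ) = Nr n := by
  have htop : completeEdges n = (⊤ : SimpleGraph (Fin n)).edgeFinset := by
    ext e
    induction e with
    | h u v => simp [completeEdges]
  rw [htop, SimpleGraph.card_edgeFinset_top_eq_card_choose_two, Fintype.card_fin,
    Nat.cast_choose_two, Nr]

lemma card_completeEdges_le (n : ℕ) : (#(completeEdges n) : ℝ) ≤ (n : ℝ) ^ 2 / 2 := by
  rw [card_completeEdges, Nr]
  nlinarith [(n.cast_nonneg : (0 : ℝ) ≤ n)]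

/-- The incidence matrix of the complete graph on `[n]` with column weights `τ`: the entry at
`(v, e)` is `τ w` if `e = s(v, w)`, and `0` if `v ∉ e`. -/
def incidence (τ : Fin n → ℝ) (v : Fin n) (e : Sym2 (Fin n)) : ℝ := by
  classical exact if h : v ∈ e then τ (Sym2.Mem.other h) else 0

/-- The centred degree of `v` in `G`, where a neighbour `w` counts with weight `τ w`. -/
def centredDeg (p : ℝ) (τ : Fin n → ℝ) (v : Fin n) (G : Finset (Sym2 (Fin n))) : ℝ :=
  ∑ e ∈ completeEdges n, incidence τ v e * centredInd p e G

lemma incidence_mk (τ : Fin n → ℝ) (v w : Fin n) : incidence τ v s(v, w) = τ w := by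
  have hmem : v ∈ s(v, w) := Sym2.mem_mk_left v w
  rw [incidence, dif_pos hmem, Sym2.congr_right.1 (Sym2.other_spec hmem)]

lemma incidence_of_notMem (τ : Fin n → ℝ) {v : Fin n} {e : Sym2 (Fin n)} (h : v ∉ e) :
    incidence τ v e = 0 :=
  dif_neg h

lemma incidence_mul (τ τ' : Fin n → ℝ) (v : Fin n) (e : Sym2 (Fin n)) :
    incidence τ v e * incidence τ' v e = incidence (fun w => τ w * τ' w) v e := by
  unfold incidence
  split_ifs <;> simp

lemma abs_incidence_le {τ : Fin n → ℝ} (hτ : ∀ w, |τ w| ≤ 1) (v : Fin n) (e : Sym2 (Fin n)) :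
    |incidence τ v e| ≤ incidence 1 v e := by
  unfold incidence
  split_ifs
  · exact hτ _
  · simp

lemma incidence_one_nonneg (v : Fin n) (e : Sym2 (Fin n)) : 0 ≤ incidence 1 v e :=
  (abs_nonneg _).trans (abs_incidence_le (fun _ => (abs_one).le) v e)

lemma sum_incidence_mul (τ : Fin n → ℝ) (v : Fin n) (f : Sym2 (Fin n) → ℝ) :
    ∑ e ∈ completeEdges n, incidence τ v e * f e = ∑ w ∈ univ.erase v, τ w * f s(v, w) := by
  classical
  have hsub : (univ.erase v).image (fun w => s(v, w)) ⊆ completeEdges n := by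
    intro e he
    obtain ⟨w, hw, rfl⟩ := mem_image.1 he
    exact mem_completeEdges.2 (ne_of_mem_erase hw).symm
  rw [← sum_subset hsub, sum_image fun _ _ _ _ h => Sym2.congr_right.1 h]
  · simp only [incidence_mk]
  · intro e he hne
    rw [incidence_of_notMem, zero_mul]
    rintro ⟨w, rfl⟩
    exact hne (mem_image.2 ⟨w, by simpa [eq_comm] using mem_completeEdges.1 he, rfl⟩)

lemma centredDeg_eq_sum (τ : Fin n → ℝ) (v : Fin n) (G : Finset (Sym2 (Fin n))) :
    centredDeg p τ v G = ∑ w ∈ univ.erase v, τ w * centredInd p s(v, w) G :=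
  sum_incidence_mul τ v _

lemma abs_mul_le_one {a b : ℝ} (ha : |a| ≤ 1) (hb : |b| ≤ 1) : |a * b| ≤ 1 :=
  (abs_mul a b).trans_le (mul_le_one₀ ha (abs_nonneg b) hb)

lemma abs_sum_le_of_abs_le_one {f : Fin n → ℝ} (hf : ∀ w, |f w| ≤ 1) (P : Finset (Fin n)) :
    |∑ w ∈ P, f w| ≤ n := by
  refine (abs_sum_le_sum_abs _ _).trans ((sum_le_card_nsmul _ _ 1 fun w _ => hf w).trans ?_)
  rw [nsmul_eq_mul, mul_one, Nat.cast_le]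
  exact card_finset_fin_le P

lemma abs_centredDeg_le (hp : p ∈ Set.Icc (0 : ℝ) 1) {τ : Fin n → ℝ} (hτ : ∀ w, |τ w| ≤ 1)
    (v : Fin n) (G : Finset (Sym2 (Fin n))) : |centredDeg p τ v G| ≤ n := by
  rw [centredDeg_eq_sum]
  exact abs_sum_le_of_abs_le_one (fun w => abs_mul_le_one (hτ w) (abs_centredInd_le_one hp _ G)) _

lemma sum_incidence_one_left_le (v : Fin n) :
    ∑ e ∈ completeEdges n, incidence 1 v e ≤ n := by
  have h := sum_incidence_mul 1 v fun _ => 1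
  simp only [mul_one] at h
  exact h.trans_le ((le_abs_self _).trans (abs_sum_le_of_abs_le_one (fun _ => abs_one.le) _))

lemma sum_incidence_one_right {e : Sym2 (Fin n)} (he : e ∈ completeEdges n) :
    ∑ v, incidence 1 v e = 2 := by
  induction e with
  | h u w =>
    have huw := mem_completeEdges.1 he
    rw [← sum_subset (subset_univ {u, w}), sum_pair huw, Sym2.eq_swap, incidence_mk, Sym2.eq_swap,
      incidence_mk]
    · norm_num
    · intro v _ hv
      exact incidence_of_notMem _ (by simpa using hv)

lemma abs_sum_incidence_le {τ : Fin n → ℝ} (hτ : ∀ w, |τ w| ≤ 1) (P : Finset (Fin n))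
    {e : Sym2 (Fin n)} (he : e ∈ completeEdges n) : |∑ x ∈ P, incidence τ x e| ≤ 2 := by
  calc |∑ x ∈ P, incidence τ x e| ≤ ∑ x ∈ P, incidence 1 x e :=
        (abs_sum_le_sum_abs _ _).trans (sum_le_sum fun x _ => abs_incidence_le hτ x e)
    _ ≤ ∑ x, incidence 1 x e :=
        sum_le_sum_of_subset_of_nonneg (subset_univ P) fun x _ _ => incidence_one_nonneg x e
    _ = 2 := sum_incidence_one_right he

lemma bernoulliProb_abs_centredDeg_gt_le (hp : p ∈ Set.Icc (0 : ℝ) 1) {τ : Fin n → ℝ}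
    (hτ : ∀ w, |τ w| ≤ 1) (v : Fin n) {L : ℝ} (hL : 0 ≤ L) :
    bernoulliProb p (completeEdges n) (fun G => √n * L < |centredDeg p τ v G|) ≤
      2 * Real.exp (-(2 * L ^ 2)) := by
  have hn : (0 : ℝ) < n := by exact_mod_cast v.pos
  have hV : ∑ e ∈ completeEdges n, incidence τ v e ^ 2 ≤ n := by
    refine le_trans (sum_le_sum fun e _ => ?_) (sum_incidence_one_left_le v)
    rw [sq, incidence_mul]
    exact (le_abs_self _).trans
      (abs_incidence_le (fun w => abs_mul_le_one (hτ w) (hτ w)) v e)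
  refine (bernoulliProb_abs_linear_gt_le hp (by positivity) hV).trans_eq ?_
  rw [mul_pow, Real.sq_sqrt hn.le]
  field_simp

lemma bernoulliProb_abs_sum_centredDeg_gt_le (hp : p ∈ Set.Icc (0 : ℝ) 1) {τ : Fin n → ℝ}
    (hτ : ∀ w, |τ w| ≤ 1) (P : Finset (Fin n)) {L : ℝ} (hL : 0 ≤ L) (hn : 0 < n) :
    bernoulliProb p (completeEdges n) (fun G => n * L < |∑ x ∈ P, centredDeg p τ x G|) ≤
      2 * Real.exp (-L ^ 2) := by
  have hV : ∑ e ∈ completeEdges n, (∑ x ∈ P, incidence τ x e) ^ 2 ≤ 2 * (n : ℝ) ^ 2 := by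
    refine (sum_le_card_nsmul _ _ (2 ^ 2) fun e he => ?_).trans ?_
    · exact sq_le_sq' (abs_le.1 (abs_sum_incidence_le hτ P he)).1
        (abs_le.1 (abs_sum_incidence_le hτ P he)).2
    · rw [nsmul_eq_mul]
      linarith [card_completeEdges_le n]
  have hform : ∀ G, ∑ x ∈ P, centredDeg p τ x G =
      ∑ e ∈ completeEdges n, (∑ x ∈ P, incidence τ x e) * centredInd p e G := by
    intro G
    simp only [centredDeg, sum_mul]
    exact sum_comm
  simp only [hform]
  refine (bernoulliProb_abs_linear_gt_le hp (by positivity) hV).trans_eq ?_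
  have hn' : (n : ℝ) ≠ 0 := by exact_mod_cast hn.ne'
  field_simp

/-- The coefficient of `ξ e * ξ f` for `e ≠ f` in `∑ x ∈ P, centredDeg τ x * centredDeg τ' x`; it
vanishes unless the two edges share a vertex, that is form a cherry. -/
def cherryCoeff (P : Finset (Fin n)) (τ τ' : Fin n → ℝ) (e f : Sym2 (Fin n)) : ℝ :=
  if e = f then 0 else ∑ x ∈ P, incidence τ x e * incidence τ' x f

/-- The quadratic form in the `ξ e` with coefficients `cherryCoeff`. -/
def cherryForm (p : ℝ) (P : Finset (Fin n)) (τ τ' : Fin n → ℝ) (G : Finset (Sym2 (Fin n))) : ℝ :=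
  ∑ e ∈ completeEdges n, ∑ f ∈ completeEdges n,
    cherryCoeff P τ τ' e f * centredInd p e G * centredInd p f G

lemma abs_cherryCoeff_le {τ τ' : Fin n → ℝ} (hτ : ∀ w, |τ w| ≤ 1) (hτ' : ∀ w, |τ' w| ≤ 1)
    (P : Finset (Fin n)) (e f : Sym2 (Fin n)) :
    |cherryCoeff P τ τ' e f| ≤ ∑ x, incidence 1 x e * incidence 1 x f := by
  have hterm : ∀ x, 0 ≤ incidence 1 x e * incidence 1 x f := fun x =>
    mul_nonneg (incidence_one_nonneg x e) (incidence_one_nonneg x f)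
  rw [cherryCoeff]
  split_ifs with h
  · simpa using sum_nonneg fun x _ => hterm x
  calc |∑ x ∈ P, incidence τ x e * incidence τ' x f|
      ≤ ∑ x ∈ P, incidence 1 x e * incidence 1 x f := by
        refine (abs_sum_le_sum_abs _ _).trans (sum_le_sum fun x _ => ?_)
        rw [abs_mul]
        exact mul_le_mul (abs_incidence_le hτ x e) (abs_incidence_le hτ' x f) (abs_nonneg _)
          (incidence_one_nonneg x e)
    _ ≤ ∑ x, incidence 1 x e * incidence 1 x f :=
        sum_le_sum_of_subset_of_nonneg (subset_univ P) fun x _ _ => hterm x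

-- Two distinct edges share at most one vertex.
lemma sum_incidence_one_mul_le_one {e f : Sym2 (Fin n)} (hef : e ≠ f) :
    ∑ x, incidence 1 x e * incidence 1 x f ≤ 1 := by
  classical
  have hterm : ∀ x, incidence 1 x e * incidence 1 x f = if x ∈ e ∧ x ∈ f then 1 else 0 := by
    intro x
    unfold incidence
    split_ifs <;> simp_all
  simp only [hterm, sum_boole]
  rw [Nat.cast_le_one, card_le_one]
  intro x hx y hy
  by_contra hxy
  simp only [mem_filter, mem_univ, true_and] at hx hy
  exact hef (Sym2.eq_of_ne_mem hxy hx.1 hy.1 hx.2 hy.2)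

lemma sum_cherryCoeff_sq_le {τ τ' : Fin n → ℝ} (hτ : ∀ w, |τ w| ≤ 1) (hτ' : ∀ w, |τ' w| ≤ 1)
    (P : Finset (Fin n)) {f : Sym2 (Fin n)} (hf : f ∈ completeEdges n) :
    ∑ e ∈ completeEdges n, (cherryCoeff P τ τ' e f + cherryCoeff P τ τ' f e) ^ 2 ≤ 8 * n := by
  have hterm : ∀ e, (cherryCoeff P τ τ' e f + cherryCoeff P τ τ' f e) ^ 2 ≤
      4 * ∑ x, incidence 1 x e * incidence 1 x f := by
    intro e
    set m := ∑ x, incidence 1 x e * incidence 1 x f with hm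
    have hef : |cherryCoeff P τ τ' e f| ≤ m := abs_cherryCoeff_le hτ hτ' P e f
    have hfe : |cherryCoeff P τ τ' f e| ≤ m := by
      simpa only [hm, mul_comm] using abs_cherryCoeff_le hτ hτ' P f e
    rcases eq_or_ne e f with rfl | hne
    · simpa [cherryCoeff] using (abs_nonneg _).trans hef
    · have hm1 : m ≤ 1 := sum_incidence_one_mul_le_one hne
      rw [abs_le] at hef hfe
      nlinarith
  calc ∑ e ∈ completeEdges n, (cherryCoeff P τ τ' e f + cherryCoeff P τ τ' f e) ^ 2
      ≤ 4 * ∑ x, (∑ e ∈ completeEdges n, incidence 1 x e) * incidence 1 x f := by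
        refine (sum_le_sum fun e _ => hterm e).trans_eq ?_
        rw [← mul_sum, sum_comm]
        simp only [sum_mul]
    _ ≤ 4 * ∑ x, n * incidence 1 x f := by
        gcongr with x _
        · exact incidence_one_nonneg x f
        · exact sum_incidence_one_left_le x
    _ = 8 * n := by
        rw [← mul_sum, sum_incidence_one_right hf]
        ring

lemma bernoulliProb_abs_cherryForm_gt_le (hp : p ∈ Set.Icc (0 : ℝ) 1) {τ τ' : Fin n → ℝ}
    (hτ : ∀ w, |τ w| ≤ 1) (hτ' : ∀ w, |τ' w| ≤ 1) (P : Finset (Fin n)) {L : ℝ} (hL : 0 < L)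
    (hn : 0 < n) :
    bernoulliProb p (completeEdges n) (fun G => n * √n * L ^ 2 < |cherryForm p P τ τ' G|) ≤
      2 * Real.exp (-(2 * L ^ 2)) + (n : ℝ) ^ 2 * (2 * Real.exp (-(L ^ 2 / 4))) := by
  have hn' : (0 : ℝ) < n := by exact_mod_cast hn
  have hcard : (#(completeEdges n) : ℝ) ≤ (n : ℝ) ^ 2 :=
    (card_completeEdges_le n).trans (half_le_self (sq_nonneg _))
  refine (bernoulliProb_abs_quadratic_gt_le hp (A := cherryCoeff P τ τ') (fun e => if_pos rfl)
    (t := √n * L) (by positivity) (by positivity) hcard fun f hf =>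
      sum_cherryCoeff_sq_le hτ hτ' P hf).trans_eq ?_
  simp only [mul_pow, Real.sq_sqrt hn'.le]
  congr 5 <;> field_simp
  norm_num

lemma sum_incidence_mul_centredInd_sq (τ : Fin n → ℝ) (x : Fin n) (G : Finset (Sym2 (Fin n))) :
    ∑ e ∈ completeEdges n, incidence τ x e * centredInd p e G ^ 2 =
      (1 - 2 * p) * centredDeg p τ x G + p * (1 - p) * ∑ w ∈ univ.erase x, τ w := by
  have hone := sum_incidence_mul τ x fun _ => 1
  simp only [mul_one] at hone
  rw [← hone, centredDeg, mul_sum, mul_sum, ← sum_add_distrib]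
  refine sum_congr rfl fun e _ => ?_
  rw [centredInd_sq]
  ring

lemma sum_incidence_mul_incidence (P : Finset (Fin n)) (τ τ' : Fin n → ℝ) (e f : Sym2 (Fin n)) :
    ∑ x ∈ P, incidence τ x e * incidence τ' x f = cherryCoeff P τ τ' e f +
      if e = f then ∑ x ∈ P, incidence (fun w => τ w * τ' w) x e else 0 := by
  rw [cherryCoeff]
  split_ifs with h
  · simp only [h, incidence_mul, zero_add]
  · rw [add_zero]

lemma sum_centredDeg_mul_centredDeg (P : Finset (Fin n)) (τ τ' : Fin n → ℝ)
    (G : Finset (Sym2 (Fin n))) :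
    ∑ x ∈ P, centredDeg p τ x G * centredDeg p τ' x G =
      cherryForm p P τ τ' G + (1 - 2 * p) * ∑ x ∈ P, centredDeg p (fun w => τ w * τ' w) x G +
        p * (1 - p) * ∑ x ∈ P, ∑ w ∈ univ.erase x, τ w * τ' w := by
  set E := completeEdges n
  calc ∑ x ∈ P, centredDeg p τ x G * centredDeg p τ' x G
      = ∑ e ∈ E, ∑ f ∈ E, (∑ x ∈ P, incidence τ x e * incidence τ' x f) *
          centredInd p e G * centredInd p f G := by
        simp only [centredDeg, sum_mul_sum]
        simp only [sum_mul]
        rw [sum_comm]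
        refine sum_congr rfl fun e _ => ?_
        rw [sum_comm]
        exact sum_congr rfl fun f _ => sum_congr rfl fun x _ => by ring
    _ = cherryForm p P τ τ' G +
          ∑ x ∈ P, ∑ e ∈ E, incidence (fun w => τ w * τ' w) x e * centredInd p e G ^ 2 := by
        simp only [sum_incidence_mul_incidence, add_mul, sum_add_distrib, ite_mul, zero_mul,
          sum_ite_eq, cherryForm]
        rw [sum_comm (s := P)]
        congr 1
        refine sum_congr rfl fun e he => ?_
        rw [if_pos he, ← sum_mul]
        ring
    _ = _ := by
        simp only [E, sum_incidence_mul_centredInd_sq, sum_add_distrib, ← mul_sum]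
        ring

lemma abs_sum_centredDeg_mul_sub_le (hp : p ∈ Set.Icc (0 : ℝ) 1) {τ τ' : Fin n → ℝ}
    (hτ : ∀ w, |τ w| ≤ 1) (hτ' : ∀ w, |τ' w| ≤ 1) (P : Finset (Fin n))
    (G : Finset (Sym2 (Fin n))) :
    |∑ x ∈ P, centredDeg p τ x G * centredDeg p τ' x G -
        p * (1 - p) * (#P * ∑ w, τ w * τ' w)| ≤
      |cherryForm p P τ τ' G| +
        |∑ x ∈ P, centredDeg p (fun w => τ w * τ' w) x G| + n := by
  have herase : ∑ x ∈ P, ∑ w ∈ univ.erase x, τ w * τ' w =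
      #P * ∑ w, τ w * τ' w - ∑ x ∈ P, τ x * τ' x := by
    rw [← nsmul_eq_mul, ← sum_const, ← sum_sub_distrib]
    exact sum_congr rfl fun x _ => by rw [← sum_erase_add _ _ (mem_univ x), add_sub_cancel_right]
  have hdiag : |∑ x ∈ P, τ x * τ' x| ≤ n :=
    abs_sum_le_of_abs_le_one (fun x => abs_mul_le_one (hτ x) (hτ' x)) P
  obtain ⟨hp0, hp1⟩ := hp
  set D := ∑ x ∈ P, centredDeg p (fun w => τ w * τ' w) x G
  calc |∑ x ∈ P, centredDeg p τ x G * centredDeg p τ' x G -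
        p * (1 - p) * (#P * ∑ w, τ w * τ' w)|
      = |cherryForm p P τ τ' G + (1 - 2 * p) * D - p * (1 - p) * ∑ x ∈ P, τ x * τ' x| := by
        rw [sum_centredDeg_mul_centredDeg, herase]
        congr 1
        ring
    _ ≤ |cherryForm p P τ τ' G| + |1 - 2 * p| * |D| + |p * (1 - p)| * |∑ x ∈ P, τ x * τ' x| := by
        rw [← abs_mul, ← abs_mul]
        exact (abs_sub _ _).trans (add_le_add_left (abs_add_le _ _) _)
    _ ≤ |cherryForm p P τ τ' G| + 1 * |D| + 1 * n := by
        gcongr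
        · exact abs_le.2 ⟨by linarith, by linarith⟩
        · exact abs_le.2 ⟨by nlinarith, by nlinarith⟩
    _ = |cherryForm p P τ τ' G| + |D| + n := by ring

lemma bernoulliProb_abs_sum_centredDeg_mul_sub_gt_le (hp : p ∈ Set.Icc (0 : ℝ) 1)
    {τ τ' : Fin n → ℝ} (hτ : ∀ w, |τ w| ≤ 1) (hτ' : ∀ w, |τ' w| ≤ 1) (P : Finset (Fin n)) {L : ℝ}
    (hL : 1 ≤ L) (hn : 0 < n) :
    bernoulliProb p (completeEdges n) (fun G => 3 * (n * √n * L ^ 2) <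
        |∑ x ∈ P, centredDeg p τ x G * centredDeg p τ' x G -
          p * (1 - p) * (#P * ∑ w, τ w * τ' w)|) ≤
      6 * (n : ℝ) ^ 2 * Real.exp (-(L ^ 2 / 4)) := by
  have hn1 : (1 : ℝ) ≤ n := by exact_mod_cast hn
  have hsqrt : 1 ≤ √n := Real.one_le_sqrt.2 hn1
  have hn_le : (n : ℝ) ≤ n * √n * L ^ 2 := by
    rw [mul_assoc]
    exact le_mul_of_one_le_right (Nat.cast_nonneg n)
      (one_le_mul_of_one_le_of_one_le hsqrt (one_le_pow₀ hL))
  have hnL_le : n * L ≤ n * √n * L ^ 2 := by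
    gcongr
    · exact le_mul_of_one_le_right (Nat.cast_nonneg n) hsqrt
    · exact le_self_pow₀ hL two_ne_zero
  have hcherry := bernoulliProb_abs_cherryForm_gt_le hp hτ hτ' P (by linarith : 0 < L) hn
  have hlinear := bernoulliProb_abs_sum_centredDeg_gt_le hp
    (fun w => abs_mul_le_one (hτ w) (hτ' w)) P (by linarith : 0 ≤ L) hn
  calc _ ≤ _ := bernoulliProb_mono hp fun G _ h => ?_
    _ ≤ _ := (bernoulliProb_or_le hp _ _ _).trans (add_le_add hcherry hlinear)
    _ ≤ 2 * Real.exp (-(L ^ 2 / 4)) +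
          (n : ℝ) ^ 2 * (2 * Real.exp (-(L ^ 2 / 4))) + 2 * Real.exp (-(L ^ 2 / 4)) := by
        gcongr <;> nlinarith
    _ ≤ 6 * (n : ℝ) ^ 2 * Real.exp (-(L ^ 2 / 4)) := by
        have := mul_le_mul_of_nonneg_right (one_le_pow₀ hn1 (n := 2))
          (Real.exp_pos (-(L ^ 2 / 4))).le
        linarith
  · by_contra! hsmall
    have := abs_sum_centredDeg_mul_sub_le hp hτ hτ' P G
    linarith [hsmall.1, hsmall.2]

end WeightedDegree

section Swap

variable {n : ℕ} {p : ℝ}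

lemma edgesIn_insert {G : Finset (Sym2 (Fin n))} (hG : G ⊆ completeEdges n)
    {S : Finset (Fin n)} {v : Fin n} (hv : v ∉ S) :
    edgesIn G (insert v S) = edgesIn G S + dS G S v := by
  classical
  have hdS : dS G S v = #({w ∈ S | s(v, w) ∈ G}.image fun w => s(v, w)) :=
    (card_image_of_injective _ fun _ _ h => Sym2.congr_right.1 h).symm
  rw [edgesIn, edgesIn, hdS, ← card_union_of_disjoint]
  · congr 1
    ext e
    induction e with
    | h a b =>
      simp only [mem_filter, Sym2.mem_iff, forall_eq_or_imp, forall_eq, mem_insert, mem_union,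
        mem_image, Sym2.eq_iff]
      constructor
      · rintro ⟨hab, rfl | ha, rfl | hb⟩
        · exact absurd rfl (mem_completeEdges.1 (hG hab))
        · exact Or.inr ⟨b, ⟨hb, hab⟩, Or.inl ⟨rfl, rfl⟩⟩
        · exact Or.inr ⟨a, ⟨ha, Sym2.eq_swap ▸ hab⟩, Or.inr ⟨rfl, rfl⟩⟩
        · exact Or.inl ⟨hab, ha, hb⟩
      · rintro (⟨hab, ha, hb⟩ | ⟨w, ⟨hw, hvw⟩, ⟨rfl, rfl⟩ | ⟨rfl, rfl⟩⟩)
        · exact ⟨hab, Or.inr ha, Or.inr hb⟩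
        · exact ⟨hvw, Or.inl rfl, Or.inr hw⟩
        · exact ⟨Sym2.eq_swap ▸ hvw, Or.inr hw, Or.inl rfl⟩
  · rw [disjoint_left]
    intro e he he'
    obtain ⟨w, _, rfl⟩ := mem_image.1 he'
    exact hv ((mem_filter.1 he).2 v (Sym2.mem_mk_left v w))

lemma dS_eq_sum_centredInd (p : ℝ) (G : Finset (Sym2 (Fin n))) (S : Finset (Fin n)) (v : Fin n) :
    (dS G S v : ℝ) = ∑ w ∈ S, centredInd p s(v, w) G + p * #S := by
  classical
  simp only [dS, centredInd, sum_sub_distrib, sum_const, nsmul_eq_mul, sum_boole]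
  ring

/-- The increment of `e(T)` under the exchange of `x` and `y`, in terms of centred degrees. With
weights `τ` equal to `1` on `T` and `0` off `T` this is the case `x ∈ T`, `y ∉ T`; subtracting `1`
from these weights swaps the roles of `T` and its complement, see `sideWeight`. -/
def swapInc (p : ℝ) (τ : Fin n → ℝ) (x y : Fin n) (G : Finset (Sym2 (Fin n))) : ℝ :=
  centredDeg p τ y G - centredDeg p τ x G - centredInd p s(x, y) G

/-- Weights for which `swapInc` is the increment of `e(S)` (for `true`) or of `e(Sᶜ)` (for
`false`) when `x ∈ S` and `y ∉ S` are exchanged. -/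
def sideWeight (S : Finset (Fin n)) : Bool → Fin n → ℝ
  | true, v => if v ∈ S then 1 else 0
  | false, v => if v ∈ S then 0 else -1

lemma abs_sideWeight_le_one (S : Finset (Fin n)) (b : Bool) (v : Fin n) :
    |sideWeight S b v| ≤ 1 := by
  cases b <;> simp only [sideWeight] <;> split_ifs <;> simp

lemma centredDeg_sideWeight_true (S : Finset (Fin n)) (v : Fin n) (G : Finset (Sym2 (Fin n))) :
    centredDeg p (sideWeight S true) v G = ∑ w ∈ S.erase v, centredInd p s(v, w) G := by
  simp only [centredDeg_eq_sum, sideWeight, ite_mul, one_mul, zero_mul, ← sum_filter]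
  congr 1
  ext w
  simp

lemma centredDeg_sideWeight_false (S : Finset (Fin n)) (v : Fin n) (G : Finset (Sym2 (Fin n))) :
    centredDeg p (sideWeight S false) v G = -centredDeg p (sideWeight Sᶜ true) v G := by
  simp only [centredDeg_eq_sum, ← sum_neg_distrib]
  refine sum_congr rfl fun w _ => ?_
  simp only [sideWeight, mem_compl]
  split_ifs <;> simp_all

lemma edgesIn_swap_sub {G : Finset (Sym2 (Fin n))} (hG : G ⊆ completeEdges n)
    {S : Finset (Fin n)} {x y : Fin n} (hx : x ∈ S) (hy : y ∉ S) :
    (edgesIn G (insert y (S.erase x)) : ℝ) - edgesIn G S = swapInc p (sideWeight S true) x y G := by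
  have hadd : edgesIn G (insert y (S.erase x)) = edgesIn G (S.erase x) + dS G (S.erase x) y :=
    edgesIn_insert hG fun h => hy (mem_of_mem_erase h)
  have hremove : edgesIn G S = edgesIn G (S.erase x) + dS G (S.erase x) x := by
    rw [← edgesIn_insert hG (notMem_erase x S), insert_erase hx]
  rw [hadd, hremove, swapInc, centredDeg_sideWeight_true, centredDeg_sideWeight_true,
    erase_eq_of_notMem hy, ← sum_erase_add S _ hx, Sym2.eq_swap (a := x) (b := y)]
  push_cast
  rw [dS_eq_sum_centredInd p, dS_eq_sum_centredInd p]
  ring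

lemma edgesIn_swap_sub_compl {G : Finset (Sym2 (Fin n))} (hG : G ⊆ completeEdges n)
    {S : Finset (Fin n)} {x y : Fin n} (hx : x ∈ S) (hy : y ∉ S) :
    (edgesIn G (insert x (Sᶜ.erase y)) : ℝ) - edgesIn G Sᶜ =
      swapInc p (sideWeight S false) x y G := by
  rw [edgesIn_swap_sub (p := p) hG (mem_compl.2 hy) (by simpa using hx), swapInc, swapInc,
    centredDeg_sideWeight_false, centredDeg_sideWeight_false, Sym2.eq_swap]
  ring

lemma Wfun_sub_Wfun (M k : ℕ) (G : Finset (Sym2 (Fin n))) (S T : Finset (Fin n)) :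
    Wfun n M k G T - Wfun n M k G S = ((edgesIn G T : ℝ) - edgesIn G S) / n := by
  simp only [Wfun]
  ring

lemma sum_sideWeight_mul_sideWeight (S : Finset (Fin n)) (c d : Bool) :
    ∑ v, sideWeight S c v * sideWeight S d v =
      if c = d then (#(if c then S else Sᶜ) : ℝ) else 0 := by
  have hpoint : ∀ v, sideWeight S c v * sideWeight S d v =
      if c = d then (if v ∈ (if c then S else Sᶜ) then 1 else 0) else 0 := fun v => by
    cases c <;> cases d <;> by_cases hv : v ∈ S <;> simp [sideWeight, hv]
  simp only [hpoint]
  split_ifs <;> simp [-mem_compl]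

/-- The properties of a set `S` relative to the graph `G` that control the conditional second
moments of a swap; here `L` is a factor `n ^ o(1)`. -/
structure IsTypical (p L : ℝ) (S : Finset (Fin n)) (G : Finset (Sym2 (Fin n))) : Prop where
  abs_centredDeg_le : ∀ b v, |centredDeg p (sideWeight S b) v G| ≤ √n * L
  abs_sum_centredDeg_le : ∀ P ∈ ({S, Sᶜ} : Finset (Finset (Fin n))), ∀ b,
    |∑ x ∈ P, centredDeg p (sideWeight S b) x G| ≤ n * L
  abs_sum_mul_sub_le : ∀ P ∈ ({S, Sᶜ} : Finset (Finset (Fin n))), ∀ c d,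
    |∑ x ∈ P, centredDeg p (sideWeight S c) x G * centredDeg p (sideWeight S d) x G -
      p * (1 - p) * (#P * ∑ v, sideWeight S c v * sideWeight S d v)| ≤ 3 * (n * √n * L ^ 2)

lemma bernoulliProb_not_isTypical_le (hp : p ∈ Set.Icc (0 : ℝ) 1) (S : Finset (Fin n)) {L : ℝ}
    (hL : 1 ≤ L) (hn : 0 < n) :
    bernoulliProb p (completeEdges n) (fun G => ¬ IsTypical p L S G) ≤
      60 * (n : ℝ) ^ 2 * Real.exp (-(L ^ 2 / 4)) := by
  have hn1 : (1 : ℝ) ≤ n := by exact_mod_cast hn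
  have hτ := abs_sideWeight_le_one S
  set sides : Finset (Finset (Fin n)) := {S, Sᶜ}
  have hcard : (#sides : ℝ) ≤ 2 := by exact_mod_cast card_le_two
  set X := Real.exp (-(L ^ 2 / 4))
  have hX0 : 0 < X := Real.exp_pos _
  have hX_sq : Real.exp (-L ^ 2) ≤ X := Real.exp_le_exp.2 (by nlinarith)
  have hX_two : Real.exp (-(2 * L ^ 2)) ≤ X := Real.exp_le_exp.2 (by nlinarith)
  have hdeg := bernoulliProb_exists_le hp (E := completeEdges n) (q := 2 * X)
    (s := (univ : Finset (Bool × Fin n)))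
    (A := fun i G => √n * L < |centredDeg p (sideWeight S i.1) i.2 G|) fun i _ =>
      (bernoulliProb_abs_centredDeg_gt_le hp (hτ i.1) i.2 (by linarith)).trans (by gcongr)
  have hsum := bernoulliProb_exists_le hp (E := completeEdges n) (q := 2 * X)
    (s := sides ×ˢ (univ : Finset Bool))
    (A := fun i G => n * L < |∑ x ∈ i.1, centredDeg p (sideWeight S i.2) x G|) fun i _ =>
      (bernoulliProb_abs_sum_centredDeg_gt_le hp (hτ i.2) i.1 (by linarith) hn).trans
        (by gcongr)
  have hmul := bernoulliProb_exists_le hp fun (i : Finset (Fin n) × Bool × Bool)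
    (_ : i ∈ sides ×ˢ univ) =>
      bernoulliProb_abs_sum_centredDeg_mul_sub_gt_le hp (hτ i.2.1) (hτ i.2.2) i.1 hL hn
  calc _ ≤ _ := bernoulliProb_mono hp fun G _ h => ?_
    _ ≤ _ := (bernoulliProb_or_le hp _ _ _).trans (add_le_add hdeg
      ((bernoulliProb_or_le hp _ _ _).trans (add_le_add hsum hmul)))
    _ ≤ 2 * n * (2 * X) + (2 * 2 * (2 * X) + 2 * 4 * (6 * (n : ℝ) ^ 2 * X)) := by
        simp only [card_product, card_univ, Fintype.card_prod, Fintype.card_bool,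
          Fintype.card_fin, Nat.cast_mul, Nat.cast_ofNat]
        gcongr
        norm_num
    _ ≤ 60 * (n : ℝ) ^ 2 * X := by
        nlinarith [mul_le_mul_of_nonneg_right hn1 hX0.le,
          mul_le_mul_of_nonneg_right (le_self_pow₀ hn1 two_ne_zero) hX0.le]
  · by_contra! hall
    exact h ⟨fun b v => hall.1 (b, v) (mem_univ _),
      fun P hP b => hall.2.1 (P, b) (mem_product.2 ⟨hP, mem_univ _⟩),
      fun P hP c d => hall.2.2 (P, c, d) (mem_product.2 ⟨hP, mem_univ _⟩)⟩

end Swap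

section SwapMoment

variable {n : ℕ} {p : ℝ}

/-- The conditional second moment, given `S`, of the increments of `e(S)` (for `true`) and `e(Sᶜ)`
(for `false`) when a uniform vertex of `S` is exchanged with a uniform vertex of `Sᶜ`. -/
def swapMoment (p : ℝ) (S : Finset (Fin n)) (c d : Bool) (G : Finset (Sym2 (Fin n))) : ℝ :=
  Exu (S ×ˢ Sᶜ) fun z =>
    swapInc p (sideWeight S c) z.1 z.2 G * swapInc p (sideWeight S d) z.1 z.2 G

/-- The value around which `swapMoment` concentrates: twice the expected product of the centred
degrees of one vertex. -/
def swapMomentCenter (p : ℝ) (S : Finset (Fin n)) (c d : Bool) : ℝ :=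
  2 * (p * (1 - p) * ∑ v, sideWeight S c v * sideWeight S d v)

lemma swapMomentCenter_congr (p : ℝ) {S T : Finset (Fin n)} (h : #S = #T) (c d : Bool) :
    swapMomentCenter p S c d = swapMomentCenter p T c d := by
  simp only [swapMomentCenter, sum_sideWeight_mul_sideWeight]
  cases c <;> simp [card_compl, h]

lemma IsTypical.abs_Exu_centredDeg_le {S P : Finset (Fin n)} {G : Finset (Sym2 (Fin n))}
    {L δ : ℝ} (hG : IsTypical p L S G) (hP : P ∈ ({S, Sᶜ} : Finset (Finset (Fin n))))
    (hδ : 0 < δ) (hn : 0 < n) (hcard : δ * n ≤ #P) (b : Bool) :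
    |Exu P (fun x => centredDeg p (sideWeight S b) x G)| ≤ L / δ := by
  have h := abs_Exu_sub_le_div (c := 0) (by positivity) hcard
    (by simpa using hG.abs_sum_centredDeg_le P hP b)
  rw [sub_zero] at h
  exact h.trans_eq (by field_simp)

lemma IsTypical.abs_Exu_mul_sub_le {S P : Finset (Fin n)} {G : Finset (Sym2 (Fin n))}
    {L δ : ℝ} (hG : IsTypical p L S G) (hP : P ∈ ({S, Sᶜ} : Finset (Finset (Fin n))))
    (hδ : 0 < δ) (hn : 0 < n) (hcard : δ * n ≤ #P) (c d : Bool) :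
    |Exu P (fun x => centredDeg p (sideWeight S c) x G * centredDeg p (sideWeight S d) x G) -
      p * (1 - p) * ∑ v, sideWeight S c v * sideWeight S d v| ≤ 3 * (√n * L ^ 2) / δ :=
  (abs_Exu_sub_le_div (by positivity) hcard
    (by simpa only [mul_left_comm] using hG.abs_sum_mul_sub_le P hP c d)).trans_eq
      (by field_simp)

lemma IsTypical.abs_swapMoment_sub_le (hp : p ∈ Set.Icc (0 : ℝ) 1) {S : Finset (Fin n)}
    {G : Finset (Sym2 (Fin n))} {L δ : ℝ} (hG : IsTypical p L S G) (hL : 1 ≤ L) (hδ : 0 < δ)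
    (hδ1 : δ ≤ 1) (hn : 0 < n) (hS : δ * n ≤ #S) (hSc : δ * n ≤ #Sᶜ) (c d : Bool) :
    |swapMoment p S c d G - swapMomentCenter p S c d| ≤ 13 * (√n * L ^ 2) / δ ^ 2 := by
  have hsqrt : 1 ≤ √n := Real.one_le_sqrt.2 (by exact_mod_cast hn)
  have hδn : 0 < δ * n := by positivity
  have hmem : S ∈ ({S, Sᶜ} : Finset (Finset (Fin n))) := mem_insert_self _ _
  have hmem' : Sᶜ ∈ ({S, Sᶜ} : Finset (Finset (Fin n))) :=
    mem_insert_of_mem (mem_singleton_self _)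
  have hclean := abs_Exu_increment_mul_sub_le (card_pos.1 (by exact_mod_cast hδn.trans_le hS))
    (card_pos.1 (by exact_mod_cast hδn.trans_le hSc))
    (hG.abs_Exu_mul_sub_le hmem hδ hn hS c d) (hG.abs_Exu_mul_sub_le hmem' hδ hn hSc c d)
    (hG.abs_Exu_centredDeg_le hmem hδ hn hS c) (hG.abs_Exu_centredDeg_le hmem' hδ hn hSc c)
    (hG.abs_Exu_centredDeg_le hmem hδ hn hS d) (hG.abs_Exu_centredDeg_le hmem' hδ hn hSc d)
  have hnoise := abs_Exu_noisy_increment_mul_sub_le S Sᶜ (by positivity)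
    (hG.abs_centredDeg_le c) (hG.abs_centredDeg_le d)
    (ξ := fun z => centredInd p s(z.1, z.2) G) fun z => abs_centredInd_le_one hp _ G
  have hsq_le : L ^ 2 ≤ √n * L ^ 2 := le_mul_of_one_le_left (by positivity) hsqrt
  have hL_le : √n * L ≤ √n * L ^ 2 := by gcongr; exact le_self_pow₀ hL two_ne_zero
  have hδ2 : δ ^ 2 ≤ 1 := pow_le_one₀ hδ.le hδ1
  calc |swapMoment p S c d G - swapMomentCenter p S c d|
      ≤ (1 + 4 * (√n * L)) + (2 * (3 * (√n * L ^ 2) / δ) + 2 * (L / δ) ^ 2) :=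
        (abs_sub_le _ _ _).trans (add_le_add hnoise hclean)
    _ = (δ ^ 2 * (1 + 4 * (√n * L)) + 6 * (δ * (√n * L ^ 2)) + 2 * L ^ 2) / δ ^ 2 := by
        field_simp
        ring
    _ ≤ (1 * (√n * L ^ 2 + 4 * (√n * L ^ 2)) + 6 * (1 * (√n * L ^ 2)) + 2 * (√n * L ^ 2)) /
          δ ^ 2 := by
        gcongr
        exact (one_le_pow₀ hL).trans hsq_le
    _ = 13 * (√n * L ^ 2) / δ ^ 2 := by ring

lemma IsTypical.sq_swapMoment_sub_div_le (hp : p ∈ Set.Icc (0 : ℝ) 1) {S : Finset (Fin n)}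
    {G : Finset (Sym2 (Fin n))} {L δ : ℝ} (hG : IsTypical p L S G) (hL : 1 ≤ L) (hδ : 0 < δ)
    (hδ1 : δ ≤ 1) (hn : 0 < n) (hS : δ * n ≤ #S) (hSc : δ * n ≤ #Sᶜ) (c d : Bool) :
    ((swapMoment p S c d G - swapMomentCenter p S c d) / n ^ 2) ^ 2 ≤
      169 / δ ^ 4 * (L ^ 4 / n ^ 3) := by
  have hn' : (0 : ℝ) < n := by exact_mod_cast hn
  calc ((swapMoment p S c d G - swapMomentCenter p S c d) / (n : ℝ) ^ 2) ^ 2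
      = |swapMoment p S c d G - swapMomentCenter p S c d| ^ 2 / n ^ 4 := by
        rw [div_pow, sq_abs, ← pow_mul]
    _ ≤ (13 * (√n * L ^ 2) / δ ^ 2) ^ 2 / n ^ 4 := by
        gcongr
        exact hG.abs_swapMoment_sub_le hp hL hδ hδ1 hn hS hSc c d
    _ = 169 * ((√n) ^ 2 * L ^ 4) / δ ^ 4 / n ^ 4 := by ring
    _ = 169 / δ ^ 4 * (L ^ 4 / n ^ 3) := by
        rw [Real.sq_sqrt hn'.le]
        field_simp

lemma abs_swapMoment_sub_le (hp : p ∈ Set.Icc (0 : ℝ) 1) {S : Finset (Fin n)} (hS : S.Nonempty)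
    (hSc : Sᶜ.Nonempty) (c d : Bool) (G : Finset (Sym2 (Fin n))) :
    |swapMoment p S c d G - swapMomentCenter p S c d| ≤ 11 * (n : ℝ) ^ 2 := by
  have hn1 : (1 : ℝ) ≤ n := by exact_mod_cast (Fin.pos hS.choose)
  have hdeg : ∀ b v, |centredDeg p (sideWeight S b) v G| ≤ n := fun b v =>
    abs_centredDeg_le hp (abs_sideWeight_le_one S b) v G
  have hmean : ∀ (P : Finset (Fin n)) b,
      |Exu P (fun x => centredDeg p (sideWeight S b) x G)| ≤ n :=
    fun P b => abs_Exu_le (Nat.cast_nonneg n) fun x _ => hdeg b x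
  have hcenter : |p * (1 - p) * ∑ v, sideWeight S c v * sideWeight S d v| ≤ 1 * n := by
    rw [abs_mul, abs_of_nonneg (mul_nonneg hp.1 (sub_nonneg.2 hp.2))]
    gcongr
    · nlinarith [hp.1, hp.2]
    · exact abs_sum_le_of_abs_le_one
        (fun v => abs_mul_le_one (abs_sideWeight_le_one S c v) (abs_sideWeight_le_one S d v)) _
  have hmul : ∀ P : Finset (Fin n),
      |Exu P (fun x => centredDeg p (sideWeight S c) x G * centredDeg p (sideWeight S d) x G) -
        p * (1 - p) * ∑ v, sideWeight S c v * sideWeight S d v| ≤ n * n + 1 * n := fun P =>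
    (abs_sub _ _).trans (add_le_add (abs_Exu_le (by positivity) fun x _ => by
      rw [abs_mul]; gcongr <;> exact hdeg _ x) hcenter)
  have hclean := abs_Exu_increment_mul_sub_le hS hSc (hmul S) (hmul Sᶜ) (hmean S c) (hmean Sᶜ c)
    (hmean S d) (hmean Sᶜ d)
  have hnoise := abs_Exu_noisy_increment_mul_sub_le S Sᶜ (Nat.cast_nonneg n) (hdeg c) (hdeg d)
    (ξ := fun z => centredInd p s(z.1, z.2) G) fun z => abs_centredInd_le_one hp _ G
  calc |swapMoment p S c d G - swapMomentCenter p S c d|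
      ≤ (1 + 4 * (n : ℝ)) + (2 * (n * n + 1 * n) + 2 * (n : ℝ) ^ 2) :=
        (abs_sub_le _ _ _).trans (add_le_add hnoise hclean)
    _ ≤ 11 * (n : ℝ) ^ 2 := by nlinarith

lemma sq_swapMoment_sub_div_le (hp : p ∈ Set.Icc (0 : ℝ) 1) {S : Finset (Fin n)}
    (hS : S.Nonempty) (hSc : Sᶜ.Nonempty) (c d : Bool) (G : Finset (Sym2 (Fin n))) :
    ((swapMoment p S c d G - swapMomentCenter p S c d) / n ^ 2) ^ 2 ≤ 121 := by
  have hn : (0 : ℝ) < n := by exact_mod_cast Fin.pos hS.choose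
  calc ((swapMoment p S c d G - swapMomentCenter p S c d) / (n : ℝ) ^ 2) ^ 2
      = |swapMoment p S c d G - swapMomentCenter p S c d| ^ 2 / n ^ 4 := by
        rw [div_pow, sq_abs, ← pow_mul]
    _ ≤ (11 * (n : ℝ) ^ 2) ^ 2 / n ^ 4 := by
        gcongr
        exact abs_swapMoment_sub_le hp hS hSc c d G
    _ = 121 := by
        field_simp
        norm_num

end SwapMoment

section Assembly

variable {n M k : ℕ} {p δ L : ℝ}

/-- The variance of the conditional expectation of `(W' - W) ^ i * (W̄' - W̄) ^ (2 - i)` given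
`(W, W̄)`, for a uniform `k`-set and a uniform swap in the graph `G`. -/
def swapCondVar (n M k : ℕ) (G : Finset (Sym2 (Fin n))) (i : ℕ) : ℝ :=
  Varu (SwapΩ n k)
    (condExpU (SwapΩ n k)
      (fun ω =>
        (Wfun n M k G (insert ω.2.2 (ω.1.erase ω.2.1)) - Wfun n M k G ω.1) ^ i *
        (Wfun n M (n - k) G (insert ω.2.1 (ω.1ᶜ.erase ω.2.2)) -
          Wfun n M (n - k) G ω.1ᶜ) ^ (2 - i))
      (fun ω => (Wfun n M k G ω.1, Wfun n M (n - k) G ω.1ᶜ)))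

lemma exists_pow_mul_pow_eq_mul {i : ℕ} (hi : i ≤ 2) :
    ∃ c d : Bool, ∀ u : Bool → ℝ, u true ^ i * u false ^ (2 - i) = u c * u d := by
  interval_cases i
  · exact ⟨false, false, fun u => by ring⟩
  · exact ⟨true, false, fun u => by ring⟩
  · exact ⟨true, true, fun u => by ring⟩

lemma exists_Exu_swap_eq_swapMoment (M k : ℕ) (p : ℝ) {G : Finset (Sym2 (Fin n))}
    (hG : G ⊆ completeEdges n) {i : ℕ} (hi : i ≤ 2) :
    ∃ c d : Bool, ∀ S : Finset (Fin n), Exu (S ×ˢ Sᶜ) (fun z =>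
        (Wfun n M k G (insert z.2 (S.erase z.1)) - Wfun n M k G S) ^ i *
        (Wfun n M (n - k) G (insert z.1 (Sᶜ.erase z.2)) - Wfun n M (n - k) G Sᶜ) ^ (2 - i)) =
      swapMoment p S c d G / n ^ 2 := by
  obtain ⟨c, d, hcd⟩ := exists_pow_mul_pow_eq_mul hi
  refine ⟨c, d, fun S => ?_⟩
  rw [swapMoment, div_eq_inv_mul, ← Exu_mul_left]
  refine Exu_congr fun z hz => ?_
  obtain ⟨hx, hy⟩ := mem_product.1 hz
  rw [Wfun_sub_Wfun, Wfun_sub_Wfun, edgesIn_swap_sub (p := p) hG hx (mem_compl.1 hy),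
    edgesIn_swap_sub_compl (p := p) hG hx (mem_compl.1 hy),
    hcd fun b => swapInc p (sideWeight S b) z.1 z.2 G / n]
  ring

lemma swapCondVar_le (hp : p ∈ Set.Icc (0 : ℝ) 1) (hδ : 0 < δ) (hL : 1 ≤ L) (hn : 0 < n)
    (hk : δ * n ≤ k) (hk' : (k : ℝ) ≤ (1 - δ) * n) {G : Finset (Sym2 (Fin n))}
    (hG : G ⊆ completeEdges n) {i : ℕ} (hi : i ≤ 2) :
    swapCondVar n M k G i ≤
      169 / δ ^ 4 * (L ^ 4 / n ^ 3) +
        121 * Pru (kSets n k) (fun S => ¬ IsTypical p L S G) := by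
  have hn' : (0 : ℝ) < n := by exact_mod_cast hn
  have hkn : k ≤ n := by
    have : (k : ℝ) ≤ n := by nlinarith
    exact_mod_cast this
  obtain ⟨c, d, hmoment⟩ := exists_Exu_swap_eq_swapMoment M k p hG hi
  obtain ⟨S₀, hS₀⟩ : (kSets n k).Nonempty := powersetCard_nonempty.2 (by simpa using hkn)
  have hcard : ∀ S ∈ kSets n k, #S = k := fun S hS => (mem_powersetCard.1 hS).2
  have hcenter : ∀ S ∈ kSets n k, Exu (S ×ˢ Sᶜ) (fun z =>
        (Wfun n M k G (insert z.2 (S.erase z.1)) - Wfun n M k G S) ^ i *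
        (Wfun n M (n - k) G (insert z.1 (Sᶜ.erase z.2)) - Wfun n M (n - k) G Sᶜ) ^ (2 - i)) -
      swapMomentCenter p S₀ c d / n ^ 2 =
      (swapMoment p S c d G - swapMomentCenter p S c d) / n ^ 2 := fun S hS => by
    rw [hmoment, swapMomentCenter_congr p ((hcard S₀ hS₀).trans (hcard S hS).symm), ← sub_div]
  refine (Varu_condExpU_sigma_le (b := k * (n - k)) (fun S hS => by
    rw [card_product, card_compl, Fintype.card_fin, hcard S hS]) _
      (fun S => (Wfun n M k G S, Wfun n M (n - k) G Sᶜ)) (swapMomentCenter p S₀ c d / n ^ 2)).trans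
    (Exu_le_add_mul_Pru (by positivity) (fun S hS hgood => ?_) fun S hS => ?_)
  all_goals
    rw [hcenter S hS]
    have hS_card : δ * n ≤ #S := by rwa [hcard S hS]
    have hSc_card : δ * n ≤ #Sᶜ := by
      rw [card_compl, Fintype.card_fin, hcard S hS, Nat.cast_sub hkn]
      linarith
  · have hδ1 : δ ≤ 1 := by nlinarith [(Nat.cast_nonneg k : (0 : ℝ) ≤ k)]
    exact (not_not.1 hgood).sq_swapMoment_sub_div_le hp hL hδ hδ1 hn hS_card hSc_card c d
  · have hδn : 0 < δ * n := by positivity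
    exact sq_swapMoment_sub_div_le hp (card_pos.1 (by exact_mod_cast hδn.trans_le hS_card))
      (card_pos.1 (by exact_mod_cast hδn.trans_le hSc_card)) c d G

lemma graphsM_eq_powersetCard (n M : ℕ) : graphsM n M = (completeEdges n).powersetCard M := by
  classical
  ext G
  simp only [graphsM, mem_filter, mem_powerset, mem_powersetCard]

lemma Pru_graphsM_not_isTypical_le (hM : M ≤ #(completeEdges n)) (hL : 1 ≤ L) (hn : 0 < n)
    (S : Finset (Fin n)) :
    Pru (graphsM n M) (fun G => ¬ IsTypical ((M : ℝ) / Nr n) L S G) ≤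
      60 * (n : ℝ) ^ 4 * Real.exp (-(L ^ 2 / 4)) := by
  have hn1 : (1 : ℝ) ≤ n := by exact_mod_cast hn
  have hp : (M : ℝ) / #(completeEdges n) ∈ Set.Icc (0 : ℝ) 1 :=
    ⟨by positivity, div_le_one_of_le₀ (by exact_mod_cast hM) (Nat.cast_nonneg _)⟩
  rw [graphsM_eq_powersetCard, ← card_completeEdges]
  calc Pru ((completeEdges n).powersetCard M)
        (fun G => ¬ IsTypical ((M : ℝ) / #(completeEdges n)) L S G)
      ≤ (#(completeEdges n) + 1) * _ := Pru_powersetCard_le _ hM _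
    _ ≤ (#(completeEdges n) + 1) * (60 * (n : ℝ) ^ 2 * Real.exp (-(L ^ 2 / 4))) := by
        gcongr
        exact bernoulliProb_not_isTypical_le hp S hL hn
    _ ≤ (n : ℝ) ^ 2 * (60 * (n : ℝ) ^ 2 * Real.exp (-(L ^ 2 / 4))) := by
        gcongr
        rw [card_completeEdges, Nr]
        nlinarith
    _ = 60 * (n : ℝ) ^ 4 * Real.exp (-(L ^ 2 / 4)) := by ring

lemma one_sub_le_PrGnM_isTypical (hM : M ≤ #(completeEdges n)) (hL : 1 ≤ L) (hn : 0 < n) (k : ℕ)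
    {s : ℝ} (hs : 0 < s) :
    1 - 60 * (n : ℝ) ^ 4 * Real.exp (-(L ^ 2 / 4)) / s ≤
      PrGnM n M (fun G => Pru (kSets n k) (fun S => ¬ IsTypical ((M : ℝ) / Nr n) L S G) ≤ s) := by
  have hgraphs : (graphsM n M).Nonempty := by
    rw [graphsM_eq_powersetCard]
    exact powersetCard_nonempty.2 hM
  have hmany := Pru_lt_Pru_le (by positivity) hs fun S (_ : S ∈ kSets n k) =>
    Pru_graphsM_not_isTypical_le hM hL hn S
  simp only [← not_le, Pru_not hgraphs] at hmany
  rw [PrGnM]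
  linarith

lemma one_sub_exp_neg_le_PrGnM_isTypical (hM : M ≤ #(completeEdges n)) (hL : 12 ≤ L)
    (hexp : 60 * (n : ℝ) ^ 4 ≤ Real.exp L) (hn : 0 < n) (k : ℕ) :
    1 - Real.exp (-L) ≤ PrGnM n M (fun G =>
      Pru (kSets n k) (fun S => ¬ IsTypical ((M : ℝ) / Nr n) L S G) ≤ Real.exp (-L)) := by
  have hfail : 60 * (n : ℝ) ^ 4 * Real.exp (-(L ^ 2 / 4)) / Real.exp (-L) ≤ Real.exp (-L) := by
    rw [div_le_iff₀ (Real.exp_pos _)]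
    calc 60 * (n : ℝ) ^ 4 * Real.exp (-(L ^ 2 / 4)) ≤ Real.exp L * Real.exp (-(L ^ 2 / 4)) := by
          gcongr
      _ ≤ Real.exp (-L) * Real.exp (-L) := by
          rw [← Real.exp_add, ← Real.exp_add]
          exact Real.exp_le_exp.2 (by nlinarith)
  exact (sub_le_sub_left hfail 1).trans
    (one_sub_le_PrGnM_isTypical hM (by linarith) hn k (Real.exp_pos (-L)))

lemma one_sub_exp_neg_le_PrGnM_swapCondVar (hM : (M : ℝ) / Nr n ≤ 1) (hδ : 0 < δ)
    (hk : δ ≤ (k : ℝ) / n) (hk' : (k : ℝ) / n ≤ 1 - δ) (hL : 12 ≤ L)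
    (hexp : 60 * (n : ℝ) ^ 4 ≤ Real.exp L) (hn : 2 ≤ n) :
    1 - Real.exp (-L) ≤ PrGnM n M (fun G =>
      ∀ i ≤ 2, swapCondVar n M k G i ≤ (169 / δ ^ 4 + 121) * (L ^ 4 / n ^ 3)) := by
  have hn2 : (2 : ℝ) ≤ n := by exact_mod_cast hn
  have hn0 : (0 : ℝ) < n := by linarith
  have hNr : 0 < Nr n := by rw [Nr]; nlinarith
  have hM_card : M ≤ #(completeEdges n) := by
    have : (M : ℝ) ≤ #(completeEdges n) := by rwa [card_completeEdges, ← div_le_one hNr]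
    exact_mod_cast this
  have hsmall : Real.exp (-L) ≤ L ^ 4 / (n : ℝ) ^ 3 := by
    rw [Real.exp_neg, inv_le_comm₀ (Real.exp_pos _) (by positivity), inv_div]
    calc (n : ℝ) ^ 3 / L ^ 4 ≤ (n : ℝ) ^ 3 :=
          div_le_self (by positivity) (one_le_pow₀ (by linarith))
      _ ≤ 60 * (n : ℝ) ^ 4 := by nlinarith [pow_pos hn0 3]
      _ ≤ Real.exp L := hexp
  refine (one_sub_exp_neg_le_PrGnM_isTypical hM_card hL hexp (by omega) k).trans
    (Pru_mono fun G hG hfew i hi => ?_)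
  rw [graphsM_eq_powersetCard] at hG
  calc swapCondVar n M k G i ≤ 169 / δ ^ 4 * (L ^ 4 / n ^ 3) + 121 * _ :=
        swapCondVar_le ⟨by positivity, hM⟩ hδ (by linarith) (by omega) ((le_div_iff₀ hn0).1 hk)
          ((div_le_iff₀ hn0).1 hk') (mem_powersetCard.1 hG).1 hi
    _ ≤ 169 / δ ^ 4 * (L ^ 4 / n ^ 3) + 121 * (L ^ 4 / n ^ 3) := by
        gcongr
        exact hfew.trans hsmall
    _ = (169 / δ ^ 4 + 121) * (L ^ 4 / n ^ 3) := by ring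

lemma eventually_mul_pow_four_le_exp_rpow {a : ℝ} (ha : 0 < a) {c : ℝ} (hc : 0 < c) :
    ∀ᶠ n : ℕ in Filter.atTop, c * (n : ℝ) ^ 4 ≤ Real.exp ((n : ℝ) ^ a) := by
  have hlim : Filter.Tendsto (fun n : ℕ => (n : ℝ) ^ a) Filter.atTop Filter.atTop :=
    (tendsto_rpow_atTop ha).comp tendsto_natCast_atTop_atTop
  have hbound := (isLittleO_rpow_exp_atTop (4 / a)).bound (inv_pos.2 hc)
  filter_upwards [hlim.eventually hbound] with n hn
  have hpow : ((n : ℝ) ^ a) ^ (4 / a) = (n : ℝ) ^ 4 := by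
    rw [← Real.rpow_mul (Nat.cast_nonneg n), mul_div_cancel₀ _ ha.ne']
    exact_mod_cast Real.rpow_natCast (n : ℝ) 4
  rwa [hpow, Real.norm_of_nonneg (by positivity), Real.norm_of_nonneg (Real.exp_pos _).le,
    inv_mul_eq_div, le_div_iff₀' hc] at hn

lemma rpow_neg_three_add {x : ℝ} (hx : 0 < x) (ε : ℝ) :
    x ^ (-(3 : ℝ) + ε) = (x ^ (ε / 4)) ^ 4 / x ^ 3 := by
  rw [← Real.rpow_natCast (x ^ (ε / 4)), ← Real.rpow_mul hx.le, ← Real.rpow_natCast x,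
    ← Real.rpow_sub hx]
  congr 1
  push_cast
  ring

end Assembly

theorem stmt_9_general (δ ε : ℝ) (hδ : 0 < δ) (hε : 0 < ε) :
    ∃ C > (0 : ℝ), ∃ η > (0 : ℝ), ∃ n₀ : ℕ, ∀ n ≥ n₀, ∀ M k : ℕ,
      (M : ℝ) / Nr n ≤ 1 → δ ≤ (k : ℝ) / n → (k : ℝ) / n ≤ 1 - δ →
      PrGnM n M (fun G => ∀ i ≤ 2, swapCondVar n M k G i ≤ C * (n : ℝ) ^ (-(3 : ℝ) + ε)) ≥
        1 - Real.exp (-(n : ℝ) ^ η) := by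
  have hη : 0 < ε / 4 := by positivity
  have hlim : Filter.Tendsto (fun n : ℕ => (n : ℝ) ^ (ε / 4)) Filter.atTop Filter.atTop :=
    (tendsto_rpow_atTop hη).comp tendsto_natCast_atTop_atTop
  obtain ⟨n₀, hn₀⟩ := Filter.eventually_atTop.1 <|
    (eventually_mul_pow_four_le_exp_rpow hη (by norm_num : (0 : ℝ) < 60)).and <|
      (hlim.eventually_ge_atTop 12).and (Filter.eventually_ge_atTop 2)
  refine ⟨169 / δ ^ 4 + 121, by positivity, ε / 4, hη, n₀, fun n hn M k hM hk hk' => ?_⟩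
  obtain ⟨hexp, hL, hn2⟩ := hn₀ n hn
  rw [rpow_neg_three_add (by positivity)]
  exact one_sub_exp_neg_le_PrGnM_swapCondVar hM hδ hk hk' hL hexp hn2

/-- Lemma 2.7: variance of conditional expectations.
Fix `δ, ε > 0`. There are `C > 0`, `η > 0`, `n₀` such that for all `n ≥ n₀` and `M, k` with
`M/N, k/n ∈ [δ, 1-δ]`, with probability at least `1 - exp(-n^η)` over `G_{n,M}`: for each
`i ∈ {0,1,2}`, `Var(E[(W'-W)^i·(W̄'-W̄)^(2-i) | 𝐖]) ≤ C·n^(-3+ε)`, where the randomness is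
over the uniform `k`-set `S`, `x` uniform on `S` and `x̄` uniform on `S̄`, conditioning on
`𝐖 = (W, W̄)`. -/
theorem stmt_9 (δ ε : ℝ) (hδ : 0 < δ) (hε : 0 < ε) :
    ∃ C > (0:ℝ), ∃ η > (0:ℝ), ∃ n₀ : ℕ, ∀ n ≥ n₀, ∀ M k : ℕ,
      δ ≤ (M : ℝ) / Nr n → (M : ℝ) / Nr n ≤ 1 - δ →
      δ ≤ (k : ℝ) / n → (k : ℝ) / n ≤ 1 - δ →
      PrGnM n M (fun G => ∀ i ≤ 2,
          Varu (SwapΩ n k)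
            (condExpU (SwapΩ n k)
              (fun ω =>
                (Wfun n M k G (insert ω.2.2 (ω.1.erase ω.2.1)) - Wfun n M k G ω.1) ^ i *
                (Wfun n M (n - k) G (insert ω.2.1 (ω.1ᶜ.erase ω.2.2)) -
                  Wfun n M (n - k) G ω.1ᶜ) ^ (2 - i))
              (fun ω => (Wfun n M k G ω.1, Wfun n M (n - k) G ω.1ᶜ)))
            ≤ C * (n:ℝ) ^ (-(3:ℝ) + ε))
        ≥ 1 - Real.exp (-(n:ℝ) ^ η) := by
  obtain ⟨C, hC, η, hη, n₀, h⟩ := stmt_9_general δ ε hδ hε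
  exact ⟨C, hC, η, hη, n₀, fun n hn M k _ hM hk hk' => h n hn M k (by linarith) hk hk'⟩
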